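/- Let 1 < α ≤ 2 and J(r) = r^{-α}. For every ε ∈ (0,1) there exists β̄ > 0 such that for every β ≥ β̄ and every L ∈ ℕ one has ⟨σ₀⟩⁺_{β,L} ≥ 1 − ε and ⟨σ₀⟩⁻_{β,L} ≤ −(1 − ε). In particular, the plus and minus finite-volume magnetizations are uniformly separated at low temperature (phase transition for the one-dimensional long-range Ising model with polynomial decay exponent α ∈ (1,2]). -/

import Mathlib

noncomputable section

/-! Configurations in `Ω_L^+` (equal to `+1` off `[-L,L]`) are encoded by the finite set
`A ⊆ [-L,L]` of their minus sites, and configurations in `Ω_L^-` by the finite set of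
their plus sites. -/

/-- The spin configuration with plus boundary condition and minus sites `A`. -/
def spinP (A : Finset ℤ) (x : ℤ) : ℝ := if x ∈ A then -1 else 1

/-- The spin configuration with minus boundary condition and plus sites `A`. -/
def spinM (A : Finset ℤ) (x : ℤ) : ℝ := if x ∈ A then 1 else -1

/-- The Hamiltonian `H_J(σ) = ∑_{x<y} |x−y|^{-α} (1 − σ_x σ_y)`, as a `tsum` over pairs. -/
def hamJ (α : ℝ) (σ : ℤ → ℝ) : ℝ :=
  ∑' p : ℤ × ℤ, if p.1 < p.2 then |(p.1 : ℝ) - (p.2 : ℝ)| ^ (-α) * (1 - σ p.1 * σ p.2) else 0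

/-- Subsets of the box `[-L, L]`. -/
def box (L : ℕ) : Finset (Finset ℤ) := (Finset.Icc (-(L : ℤ)) (L : ℤ)).powerset

/-- The finite-volume Gibbs expectation `⟨σ₀⟩⁺_{β,L}`. -/
def avgP (α β : ℝ) (L : ℕ) : ℝ :=
  (∑ A ∈ box L, spinP A 0 * Real.exp (-β * hamJ α (spinP A))) /
    ∑ A ∈ box L, Real.exp (-β * hamJ α (spinP A))

/-- The finite-volume Gibbs expectation `⟨σ₀⟩⁻_{β,L}`. -/
def avgM (α β : ℝ) (L : ℕ) : ℝ :=
  (∑ A ∈ box L, spinM A 0 * Real.exp (-β * hamJ α (spinM A))) /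
    ∑ A ∈ box L, Real.exp (-β * hamJ α (spinM A))

/-!
Expanding `exp (-β J (1 - σ_x σ_y))`, up to a constant factor, as `1 + tanh (β J) σ_x σ_y` writes
the plus magnetization at `o` as the probability that `o` is connected to the complement of the box,
for bond percolation with edge probabilities `tanh (β J)` reweighted by the increasing function
`clusterWeight`. By Harris' inequality it is at least the same probability for independent
percolation, in which the edge `(x, y)` is closed with probability at most `exp (-β / (y - x) ^ 2)`.

It remains to show that `o` lies in arbitrarily large clusters with high probability, by
renormalization. Call a block good if its open edges connect a large proportion of its sites. Blocks
of one scale are covered by `2 * M - 1` half-overlapping blocks of the previous scale, and since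
dense clusters of overlapping blocks intersect, runs of good sub-blocks are connected. Hence a bad
block contains either two disjoint bad sub-blocks, or a single defect that separates two long good
flanks whose clusters are not joined by any edge. If the flanks contain at least `2 ^ (k + 1)`
sub-blocks, each of `k` dyadic scales around the defect contributes at least `1 / 40` to
`∑ 1 / (y - x) ^ 2` over the pairs of sites in the two clusters, so that they fail to be joined with
probability at most `exp (-β k / 40)`. Writing `q` for the probability that a sub-block is bad, that
of the block is at most `4 * M ^ 2 * q ^ 2 + 2 * M * exp (-β k / 40) * q`. With `M = 4 ^ k` this
decays from scale to scale for large `β`.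
-/

section Percolation

open Finset

variable {E : Type*} [DecidableEq E] (p : E → unitInterval) {F G S : Finset E}

/-- The probability that, in independent bond percolation on the finite edge set `F` where the edge
`e` is open with probability `p e`, the set of open edges is `ω ⊆ F`. -/
def percWeight (F ω : Finset E) : ℝ := ∏ e ∈ F, if e ∈ ω then (p e : ℝ) else 1 - p e

/-- Expectation with respect to independent bond percolation on the finite edge set `F`, as a
linear functional of the observable, a function of the set of open edges. -/
def percMean (F : Finset E) : (Finset E → ℝ) →ₗ[ℝ] ℝ :=
  ∑ ω ∈ F.powerset, percWeight p F ω • LinearMap.proj ω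

/-- Probability of the event `Q` in independent bond percolation on `F`. Observables and events
depend on a configuration that is an arbitrary finite set of edges, so that the same event can be
considered for different `F`. -/
def percProb (F : Finset E) (Q : Set (Finset E)) : ℝ := percMean p F (Q.indicator 1)

lemma percWeight_nonneg (F ω : Finset E) : 0 ≤ percWeight p F ω :=
  prod_nonneg fun e _ => by split_ifs <;> [exact (p e).2.1; exact sub_nonneg.2 (p e).2.2]

lemma percWeight_mul_percWeight (F ω η : Finset E) :
    percWeight p F ω * percWeight p F η = percWeight p F (ω ∩ η) * percWeight p F (ω ∪ η) := by
  simp only [percWeight, ← prod_mul_distrib]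
  refine prod_congr rfl fun e _ => ?_
  by_cases hω : e ∈ ω <;> by_cases hη : e ∈ η <;> simp [hω, hη, mul_comm]

lemma percMean_apply (F : Finset E) (f : Finset E → ℝ) :
    percMean p F f = ∑ ω ∈ F.powerset, percWeight p F ω * f ω := by
  simp [percMean]

lemma percMean_prod (F : Finset E) (a : E → ℝ) :
    percMean p F (fun ω => ∏ e ∈ ω, a e) = ∏ e ∈ F, (1 - p e + p e * a e) := by
  rw [percMean_apply]
  simp_rw [add_comm (1 - (p _ : ℝ)), prod_add]
  refine sum_congr rfl fun ω hω => ?_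
  rw [percWeight, prod_ite, prod_mul_distrib, filter_mem_eq_inter,
    inter_eq_right.2 (mem_powerset.1 hω), ← sdiff_eq_filter]
  ring

lemma percMean_one (F : Finset E) : percMean p F 1 = 1 := by
  simpa [Pi.one_def] using percMean_prod p F fun _ => 1

lemma percMean_mono {f g : Finset E → ℝ} (h : ∀ ω ⊆ F, f ω ≤ g ω) :
    percMean p F f ≤ percMean p F g := by
  simp only [percMean_apply]
  exact sum_le_sum fun ω hω =>
    mul_le_mul_of_nonneg_left (h ω (mem_powerset.1 hω)) (percWeight_nonneg p F ω)

lemma percWeight_union (h : Disjoint F G) {ω η : Finset E} (hω : ω ⊆ F) (hη : η ⊆ G) :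
    percWeight p (F ∪ G) (ω ∪ η) = percWeight p F ω * percWeight p G η := by
  rw [percWeight, prod_union h]
  congr 1 <;> refine prod_congr rfl fun e he => ?_
  · have : e ∉ η := fun he' => disjoint_left.1 h he (hη he')
    simp [this]
  · have : e ∉ ω := fun he' => disjoint_left.1 h (hω he') he
    simp [this]

lemma percMean_union (h : Disjoint F G) (f : Finset E → ℝ) :
    percMean p (F ∪ G) f = percMean p F fun ω => percMean p G fun η => f (ω ∪ η) := by
  simp only [percMean_apply, mul_sum, ← sum_product']
  symm
  refine sum_bij' (fun ζ _ => ζ.1 ∪ ζ.2) (fun ζ _ => (ζ ∩ F, ζ ∩ G)) ?_ ?_ ?_ ?_ ?_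
  · simp only [mem_product, mem_powerset]
    exact fun ζ hζ => union_subset_union hζ.1 hζ.2
  · simp [inter_subset_right]
  · simp only [mem_product, mem_powerset]
    rintro ⟨ω, η⟩ ⟨hω, hη⟩
    simp only [union_inter_distrib_right, inter_eq_left.2 hω, inter_eq_left.2 hη,
      disjoint_iff_inter_eq_empty.1 (h.symm.mono_left hη),
      disjoint_iff_inter_eq_empty.1 (h.mono_left hω), union_empty, empty_union]
  · simp only [mem_powerset]
    exact fun ζ hζ => by rw [← inter_union_distrib_left, inter_eq_left.2 hζ]
  · simp only [mem_product, mem_powerset]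
    exact fun ζ hζ => by rw [percWeight_union p h hζ.1 hζ.2, mul_assoc]

/-- **Harris' inequality**. -/
lemma percMean_mul_le (F : Finset E) {f g : Finset E → ℝ} (hf : Monotone f) (hg : Monotone g)
    (hf₀ : 0 ≤ f) (hg₀ : 0 ≤ g) : percMean p F f * percMean p F g ≤ percMean p F (f * g) := by
  have hw := percWeight_nonneg p F
  have four := four_functions_theorem (percWeight p F * f) (percWeight p F * g) (percWeight p F)
    (percWeight p F * (f * g)) (mul_nonneg hw hf₀) (mul_nonneg hw hg₀) hw
    (mul_nonneg hw (mul_nonneg hf₀ hg₀)) (fun ω η => ?_) F.powerset F.powerset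
  · have one : ∑ ω ∈ F.powerset, percWeight p F ω = 1 := by
      simpa [percMean_apply] using percMean_one p F
    simpa [percMean_apply, one] using four
  · calc percWeight p F ω * f ω * (percWeight p F η * g η)
        = percWeight p F (ω ∩ η) * percWeight p F (ω ∪ η) * (f ω * g η) := by
          rw [← percWeight_mul_percWeight]
          ring
      _ ≤ percWeight p F (ω ∩ η) * percWeight p F (ω ∪ η) * (f (ω ∪ η) * g (ω ∪ η)) :=
          mul_le_mul_of_nonneg_left
            (mul_le_mul (hf subset_union_left) (hg subset_union_right) (hg₀ _) (hf₀ _))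
            (mul_nonneg (hw _) (hw _))
      _ = _ := mul_assoc _ _ _

variable {p} {Q R : Set (Finset E)} {κ : ℝ}

lemma percProb_mono (h : ∀ ω ⊆ F, ω ∈ Q → ω ∈ R) : percProb p F Q ≤ percProb p F R := by
  refine percMean_mono p fun ω hω => ?_
  by_cases hQ : ω ∈ Q
  · simp [hQ, h ω hω hQ]
  · rw [Set.indicator_of_notMem hQ]
    exact Set.indicator_nonneg (fun _ _ => zero_le_one) ω

lemma percProb_empty : percProb p F ∅ = 0 := by
  rw [percProb, Set.indicator_empty', map_zero]

lemma percProb_univ : percProb p F Set.univ = 1 := by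
  rw [percProb, Set.indicator_univ, percMean_one]

lemma percProb_nonneg : 0 ≤ percProb p F Q :=
  percProb_empty.symm.trans_le (percProb_mono fun _ _ => False.elim)

lemma percProb_mul_percMean_le (hQ : IsUpperSet Q) {f : Finset E → ℝ} (hf : Monotone f)
    (hf₀ : 0 ≤ f) : percProb p F Q * percMean p F f ≤ percMean p F (Q.indicator 1 * f) := by
  have hnonneg : (0 : Finset E → ℝ) ≤ Q.indicator 1 := fun ω =>
    Set.indicator_nonneg (fun _ _ => zero_le_one) ω
  refine percMean_mul_le p F (fun ω η h => ?_) hf hnonneg hf₀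
  by_cases hω : ω ∈ Q
  · simp [hω, hQ h hω]
  · rw [Set.indicator_of_notMem hω]
    exact hnonneg η

lemma percProb_compl : percProb p F Qᶜ = 1 - percProb p F Q := by
  rw [percProb, Set.indicator_compl, map_sub, percMean_one, percProb]

lemma percProb_union_le : percProb p F (Q ∪ R) ≤ percProb p F Q + percProb p F R := by
  rw [percProb, percProb, percProb, ← map_add]
  refine percMean_mono p fun ω _ => ?_
  by_cases hQ : ω ∈ Q <;> by_cases hR : ω ∈ R <;> simp [hQ, hR]

lemma percProb_biUnion_le {ι : Type*} (s : Finset ι) {Q : ι → Set (Finset E)} {c : ℝ}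
    (h : ∀ i ∈ s, percProb p F (Q i) ≤ c) : percProb p F (⋃ i ∈ s, Q i) ≤ #s * c := by
  classical
  induction s using Finset.induction_on with
  | empty => simp [percProb_empty]
  | insert i s hi ih =>
    rw [set_biUnion_insert, card_insert_of_notMem hi]
    push_cast
    linarith [percProb_union_le (p := p) (F := F) (Q := Q i) (R := ⋃ j ∈ s, Q j),
      h i (mem_insert_self i s), ih fun j hj => h j (mem_insert_of_mem hj)]

lemma percProb_le_mul (hS : S ⊆ F)
    (h : ∀ ω ⊆ F \ S, percProb p S {η | ω ∪ η ∈ Q} ≤ R.indicator (fun _ => κ) ω) :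
    percProb p F Q ≤ κ * percProb p (F \ S) R := by
  conv_lhs => rw [percProb, ← sdiff_union_of_subset hS, percMean_union p sdiff_disjoint]
  rw [percProb, ← smul_eq_mul, ← map_smul]
  refine percMean_mono p fun ω hω => (h ω hω).trans_eq ?_
  by_cases hR : ω ∈ R <;> simp [hR]

lemma percProb_inter_le_mul (hQ : IsLowerSet Q) (hR : IsLowerSet R) (hS : S ⊆ F) :
    percProb p F (Q ∩ R) ≤ percProb p S Q * percProb p (F \ S) R :=
  percProb_le_mul hS fun ω _ => by
    by_cases hω : ω ∈ R
    · rw [Set.indicator_of_mem hω]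
      exact percProb_mono fun η _ (h : ω ∪ η ∈ Q ∩ R) => hQ subset_union_right h.1
    · rw [Set.indicator_of_notMem hω, ← percProb_empty (p := p) (F := S)]
      exact percProb_mono fun η _ (h : ω ∪ η ∈ Q ∩ R) => hω (hR subset_union_left h.2)

lemma percProb_anti (hQ : IsLowerSet Q) (hS : S ⊆ F) : percProb p F Q ≤ percProb p S Q := by
  have h := percProb_inter_le_mul (p := p) hQ isLowerSet_univ hS
  rwa [Set.inter_univ, percProb_univ, mul_one] at h

lemma percProb_disjoint (h : S ⊆ F) :
    percProb p F {ω | Disjoint ω S} = ∏ e ∈ S, (1 - (p e : ℝ)) := by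
  have key : Set.indicator {ω | Disjoint ω S} (1 : Finset E → ℝ)
      = fun ω => ∏ e ∈ ω, if e ∉ S then 1 else 0 := by
    ext ω
    simp only [prod_ite_zero, prod_const_one, ← disjoint_left, Set.indicator_apply,
      Set.mem_ofPred_eq, Pi.one_apply]
  rw [percProb, key, percMean_prod, ← prod_subset h fun e _ he => by simp [he]]
  exact prod_congr rfl fun e he => by simp [he]

end Percolation

section Connectivity

variable {V : Type*} {ω η : Finset (V × V)} {x y z : V} {A : Finset V}

/-- The vertices `x` and `y` belong to the same cluster of `ω`, the edges being undirected. -/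
def Connects (ω : Finset (V × V)) : V → V → Prop :=
  Relation.EqvGen fun x y => (x, y) ∈ ω

/-- All vertices of `A` belong to the same cluster of `ω`, possibly through vertices outside `A`. -/
def ConnectsSet (ω : Finset (V × V)) (A : Finset V) : Prop :=
  ∀ x ∈ A, ∀ y ∈ A, Connects ω x y

/-- The event that the cluster of `o` is not contained in `Λ`. -/
def connectsToCompl (o : V) (Λ : Finset V) : Set (Finset (V × V)) :=
  {ω | ∃ x ∉ Λ, Connects ω o x}

lemma Connects.rel (h : (x, y) ∈ ω) : Connects ω x y := Relation.EqvGen.rel _ _ h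

lemma Connects.symm (h : Connects ω x y) : Connects ω y x := Relation.EqvGen.symm _ _ h

lemma Connects.trans (h : Connects ω x y) (h' : Connects ω y z) : Connects ω x z :=
  Relation.EqvGen.trans _ _ _ h h'

lemma Connects.mono (h : ω ⊆ η) (hω : Connects ω x y) : Connects η x y :=
  Relation.EqvGen.mono (fun _ _ he => h he) _ _ hω

lemma Connects.mem_iff_mem (h : Connects ω x y) (hA : ∀ e ∈ ω, e.1 ∈ A ↔ e.2 ∈ A) :
    x ∈ A ↔ y ∈ A := by
  induction h with
  | rel x y h => exact hA _ h
  | refl => rfl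
  | symm _ _ _ ih => exact ih.symm
  | trans _ _ _ _ _ ih ih' => exact ih.trans ih'

lemma ConnectsSet.mono (h : ω ⊆ η) (hω : ConnectsSet ω A) : ConnectsSet η A :=
  fun x hx y hy => (hω x hx y hy).mono h

lemma isUpperSet_connectsToCompl (o : V) (Λ : Finset V) : IsUpperSet (connectsToCompl o Λ) :=
  fun _ _ h ⟨x, hx, hω⟩ => ⟨x, hx, hω.mono h⟩

end Connectivity

section Spins

open Finset

variable {V : Type*} [DecidableEq V] {A B Λ : Finset V} {ω : Finset (V × V)} {o : V}

/-- The spin configuration with minus sites `A`. -/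
def spin (A : Finset V) (x : V) : ℝ := if x ∈ A then -1 else 1

/-- The product of the spins at the ends of the edge `e`. -/
def edgeSpin (A : Finset V) (e : V × V) : ℝ := spin A e.1 * spin A e.2

/-- The weight of `ω` in the random cluster expansion of the Ising model in `Λ` with plus boundary
condition: `2 ^ #ω` times the number of configurations that are constant on the clusters of `ω`. -/
def clusterWeight (Λ : Finset V) (ω : Finset (V × V)) : ℝ :=
  ∑ A ∈ Λ.powerset, ∏ e ∈ ω, (1 + edgeSpin A e)

lemma spin_symmDiff (A B : Finset V) (x : V) : spin (symmDiff A B) x = spin A x * spin B x := by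
  by_cases hA : x ∈ A <;> by_cases hB : x ∈ B <;> simp [spin, mem_symmDiff, hA, hB]

lemma edgeSpin_symmDiff (A B : Finset V) (e : V × V) :
    edgeSpin (symmDiff A B) e = edgeSpin A e * edgeSpin B e := by
  simp only [edgeSpin, spin_symmDiff]
  ring

lemma edgeSpin_eq (A : Finset V) (e : V × V) :
    edgeSpin A e = if e.1 ∈ A ↔ e.2 ∈ A then 1 else -1 := by
  by_cases h₁ : e.1 ∈ A <;> by_cases h₂ : e.2 ∈ A <;> simp [edgeSpin, spin, h₁, h₂]

lemma one_add_edgeSpin_nonneg (A : Finset V) (e : V × V) : 0 ≤ 1 + edgeSpin A e := by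
  rw [edgeSpin_eq]
  split_ifs <;> norm_num

lemma mem_iff_mem_of_prod_ne_zero (h : ∏ e ∈ ω, (1 + edgeSpin A e) ≠ 0) {e : V × V} (he : e ∈ ω) :
    e.1 ∈ A ↔ e.2 ∈ A := by
  by_contra hA
  exact prod_ne_zero_iff.1 h e he (by simp [edgeSpin_eq, hA])

/-- Flipping the spins of `B` is an involution that leaves the weights invariant. -/
lemma sum_mul_prod_eq_zero (hB : B ⊆ Λ) (hω : ∀ e ∈ ω, e.1 ∈ B ↔ e.2 ∈ B) {χ : Finset V → ℝ}
    (hχ : ∀ A, χ (symmDiff A B) = -χ A) :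
    ∑ A ∈ Λ.powerset, χ A * ∏ e ∈ ω, (1 + edgeSpin A e) = 0 := by
  refine sum_involution (fun A _ => symmDiff A B) (fun A _ => ?_) (fun A _ hA hAB => ?_)
    (fun A hA => ?_) fun A _ => symmDiff_symmDiff_cancel_right B A
  · have : ∏ e ∈ ω, (1 + edgeSpin (symmDiff A B) e) = ∏ e ∈ ω, (1 + edgeSpin A e) :=
      prod_congr rfl fun e he => by simp [edgeSpin_symmDiff, edgeSpin_eq B, hω e he]
    rw [hχ, this]
    ring
  · have := hχ A
    rw [hAB, self_eq_neg] at this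
    simp [this] at hA
  · exact mem_powerset.2 (symmDiff_subset_union.trans (union_subset (mem_powerset.1 hA) hB))

lemma clusterWeight_nonneg (Λ : Finset V) (ω : Finset (V × V)) : 0 ≤ clusterWeight Λ ω :=
  sum_nonneg fun A _ => prod_nonneg fun e _ => one_add_edgeSpin_nonneg A e

lemma clusterWeight_mono (Λ : Finset V) : Monotone (clusterWeight Λ) := by
  refine monotone_iff_forall_le_insert.2 fun ω e he => ?_
  have expand : clusterWeight Λ (insert e ω) = clusterWeight Λ ω +
      ∑ A ∈ Λ.powerset, edgeSpin A e * ∏ e ∈ ω, (1 + edgeSpin A e) := by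
    simp only [clusterWeight, prod_insert he, add_mul, one_mul, sum_add_distrib]
  suffices 0 ≤ ∑ A ∈ Λ.powerset, edgeSpin A e * ∏ e ∈ ω, (1 + edgeSpin A e) by linarith
  by_cases flip : ∃ B ⊆ Λ, (∀ e' ∈ ω, e'.1 ∈ B ↔ e'.2 ∈ B) ∧ ¬(e.1 ∈ B ↔ e.2 ∈ B)
  · obtain ⟨B, hB, hω, heB⟩ := flip
    exact (sum_mul_prod_eq_zero hB hω fun A => by
      simp [edgeSpin_symmDiff, edgeSpin_eq B, heB]).ge
  · refine sum_nonneg fun A hA => ?_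
    obtain h | h := eq_or_ne (∏ e ∈ ω, (1 + edgeSpin A e)) 0
    · simp [h]
    · have heA : e.1 ∈ A ↔ e.2 ∈ A := not_not.1 fun heA =>
        flip ⟨A, mem_powerset.1 hA, fun _ he' => mem_iff_mem_of_prod_ne_zero h he', heA⟩
      rw [edgeSpin_eq, if_pos heA, one_mul]
      exact prod_nonneg fun e _ => one_add_edgeSpin_nonneg A e

lemma sum_spin_mul_prod_eq (o : V) (Λ : Finset V) (ω : Finset (V × V)) :
    ∑ A ∈ Λ.powerset, spin A o * ∏ e ∈ ω, (1 + edgeSpin A e)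
      = (connectsToCompl o Λ).indicator 1 ω * clusterWeight Λ ω := by
  classical
  by_cases hω : ω ∈ connectsToCompl o Λ
  · rw [Set.indicator_of_mem hω, Pi.one_apply, one_mul]
    refine sum_congr rfl fun A hA => ?_
    obtain h | h := eq_or_ne (∏ e ∈ ω, (1 + edgeSpin A e)) 0
    · simp [h]
    · obtain ⟨x, hx, hox⟩ := hω
      have ho : o ∉ A := fun ho => hx <| mem_powerset.1 hA <|
        (hox.mem_iff_mem fun _ he => mem_iff_mem_of_prod_ne_zero h he).1 ho
      simp [spin, ho]
  · rw [Set.indicator_of_notMem hω, zero_mul]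
    have hcluster : ∀ x, Connects ω o x → x ∈ Λ := fun x hx =>
      by_contra fun hxΛ => hω ⟨x, hxΛ, hx⟩
    refine sum_mul_prod_eq_zero (filter_subset (Connects ω o) Λ) (fun e he => ?_) fun A => ?_
    · have hc : Connects ω o e.1 ↔ Connects ω o e.2 :=
        ⟨fun h => h.trans (.rel he), fun h => h.trans (Connects.rel he).symm⟩
      simp only [mem_filter, hc, and_congr_left_iff]
      exact fun h => ⟨fun _ => hcluster _ h, fun _ => hcluster _ (hc.2 h)⟩
    · have ho : Connects ω o o := Relation.EqvGen.refl o
      have hspin : spin (Λ.filter (Connects ω o)) o = -1 := by simp [spin, ho, hcluster o ho]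
      rw [spin_symmDiff, hspin, mul_neg_one]

lemma percProb_mul_sum_le (p : V × V → unitInterval) (o : V) (Λ : Finset V) (F : Finset (V × V)) :
    percProb p F (connectsToCompl o Λ) * ∑ A ∈ Λ.powerset, ∏ e ∈ F, (1 + p e * edgeSpin A e)
      ≤ ∑ A ∈ Λ.powerset, spin A o * ∏ e ∈ F, (1 + p e * edgeSpin A e) := by
  have hprod : ∀ A : Finset V, ∏ e ∈ F, (1 + p e * edgeSpin A e)
      = percMean p F fun ω => ∏ e ∈ ω, (1 + edgeSpin A e) := fun A => by
    rw [percMean_prod]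
    exact prod_congr rfl fun e _ => by ring
  have hsum : ∀ c : Finset V → ℝ, ∑ A ∈ Λ.powerset, c A * ∏ e ∈ F, (1 + p e * edgeSpin A e)
      = percMean p F fun ω => ∑ A ∈ Λ.powerset, c A * ∏ e ∈ ω, (1 + edgeSpin A e) := fun c => by
    simp only [hprod, percMean_apply, mul_sum]
    rw [sum_comm]
    exact sum_congr rfl fun _ _ => sum_congr rfl fun _ _ => by ring
  have hZ := hsum 1
  simp only [Pi.one_apply, one_mul] at hZ
  rw [hsum, hZ]
  simp only [sum_spin_mul_prod_eq]
  exact percProb_mul_percMean_le (isUpperSet_connectsToCompl o Λ) (clusterWeight_mono Λ)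
    (clusterWeight_nonneg Λ)

end Spins

section Ising

open Finset Filter Topology

variable {V : Type*}

/-- The energy of the spin configuration `σ` for the interaction `J`. The sum is over ordered pairs,
so that an unordered pair contributes `J (x, y) + J (y, x)`; an interaction of the usual form is
recovered by letting `J` vanish on one of the two orderings. -/
def energy (J : V × V → ℝ) (σ : V → ℝ) : ℝ := ∑' e : V × V, J e * (1 - σ e.1 * σ e.2)

/-- The Gibbs expectation, at inverse temperature `β`, of the spin at `o` when the allowed spin
configurations are the `σ A` for `A ⊆ Λ`. -/
def magnetization (J : V × V → ℝ) (β : ℝ) (Λ : Finset V) (σ : Finset V → V → ℝ) (o : V) : ℝ :=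
  (∑ A ∈ Λ.powerset, σ A o * Real.exp (-β * energy J (σ A))) /
    ∑ A ∈ Λ.powerset, Real.exp (-β * energy J (σ A))

lemma energy_neg (J : V × V → ℝ) (σ : V → ℝ) : energy J (-σ) = energy J σ := by
  simp [energy]

lemma magnetization_neg (J : V × V → ℝ) (β : ℝ) (Λ : Finset V) (σ : Finset V → V → ℝ) (o : V) :
    magnetization J β Λ (-σ) o = -magnetization J β Λ σ o := by
  simp [magnetization, energy_neg, neg_div]

lemma exp_neg_mul_one_sub {s : ℝ} (hs : s = 1 ∨ s = -1) (x : ℝ) :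
    Real.exp (-(x * (1 - s))) = Real.exp (-x) * Real.cosh x * (1 + Real.tanh x * s) := by
  have hc : Real.cosh x * (1 + Real.tanh x * s) = Real.cosh x + Real.sinh x * s := by
    rw [Real.tanh_eq_sinh_div_cosh]
    field_simp [(Real.cosh_pos x).ne']
  rw [mul_assoc, hc]
  rcases hs with rfl | rfl
  · rw [mul_one, Real.cosh_add_sinh, ← Real.exp_add]
    simp
  · rw [mul_neg_one, ← sub_eq_add_neg, Real.cosh_sub_sinh, ← Real.exp_add]
    ring_nf

lemma tanh_mem_unitInterval {x : ℝ} (hx : 0 ≤ x) : Real.tanh x ∈ unitInterval := by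
  refine ⟨?_, (Real.tanh_lt_one x).le⟩
  rw [Real.tanh_eq_sinh_div_cosh]
  exact div_nonneg (Real.sinh_nonneg_iff.2 hx) (Real.cosh_pos x).le

lemma one_sub_tanh_le_exp_neg (x : ℝ) : 1 - Real.tanh x ≤ Real.exp (-x) := by
  rw [Real.tanh_eq_sinh_div_cosh, one_sub_div (Real.cosh_pos x).ne', Real.cosh_sub_sinh]
  exact div_le_self (Real.exp_pos _).le (Real.one_le_cosh x)

variable [DecidableEq V] {J : V × V → ℝ} {β : ℝ} {p : V × V → unitInterval} {Λ : Finset V}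

lemma edgeSpin_eq_one_or (A : Finset V) (e : V × V) : edgeSpin A e = 1 ∨ edgeSpin A e = -1 := by
  rw [edgeSpin_eq]
  split_ifs <;> simp

lemma percProb_mul_sum_exp_le (hp : ∀ e, (p e : ℝ) = Real.tanh (β * J e)) (o : V) (Λ : Finset V)
    (F : Finset (V × V)) :
    percProb p F (connectsToCompl o Λ) *
        ∑ A ∈ Λ.powerset, Real.exp (-β * ∑ e ∈ F, J e * (1 - edgeSpin A e))
      ≤ ∑ A ∈ Λ.powerset, spin A o * Real.exp (-β * ∑ e ∈ F, J e * (1 - edgeSpin A e)) := by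
  have hexp : ∀ A : Finset V, Real.exp (-β * ∑ e ∈ F, J e * (1 - edgeSpin A e))
      = (∏ e ∈ F, Real.exp (-(β * J e)) * Real.cosh (β * J e)) *
        ∏ e ∈ F, (1 + p e * edgeSpin A e) := fun A => by
    rw [← prod_mul_distrib, mul_sum, Real.exp_sum]
    refine prod_congr rfl fun e _ => ?_
    rw [hp, ← exp_neg_mul_one_sub (edgeSpin_eq_one_or A e)]
    ring_nf
  have hpos : 0 ≤ ∏ e ∈ F, Real.exp (-(β * J e)) * Real.cosh (β * J e) :=
    prod_nonneg fun e _ => mul_nonneg (Real.exp_pos _).le (Real.cosh_pos _).le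
  simp only [hexp, mul_left_comm (spin _ o), mul_left_comm (percProb p F _), ← mul_sum]
  exact mul_le_mul_of_nonneg_left (percProb_mul_sum_le p o Λ F) hpos

theorem percProb_le_magnetization (hp : ∀ e, (p e : ℝ) = Real.tanh (β * J e))
    (hJ : ∀ A ⊆ Λ, Summable fun e => J e * (1 - edgeSpin A e)) (o : V) (F : Finset (V × V)) :
    percProb p F (connectsToCompl o Λ) ≤ magnetization J β Λ spin o := by
  have hlim : ∀ A ∈ Λ.powerset,
      Tendsto (fun G => Real.exp (-β * ∑ e ∈ G, J e * (1 - edgeSpin A e))) atTop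
        (𝓝 (Real.exp (-β * energy J (spin A)))) := fun A hA =>
    ((hJ A (mem_powerset.1 hA)).hasSum.const_mul (-β)).rexp
  rw [magnetization, le_div_iff₀ (sum_pos (fun A _ => Real.exp_pos _) ⟨∅, by simp⟩)]
  refine le_of_tendsto_of_tendsto ((tendsto_finsetSum _ hlim).const_mul _)
    (tendsto_finsetSum _ fun A hA => (hlim A hA).const_mul _) ?_
  filter_upwards [eventually_ge_atTop F] with G hFG
  refine le_trans (mul_le_mul_of_nonneg_right ?_ (sum_nonneg fun A _ => (Real.exp_pos _).le))
    (percProb_mul_sum_exp_le hp o Λ G)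
  have hanti := percProb_anti (p := p) (isUpperSet_connectsToCompl o Λ).compl hFG
  rw [percProb_compl, percProb_compl] at hanti
  linarith

lemma summable_mul_one_sub_edgeSpin (hJ₀ : 0 ≤ J) (hrow : ∀ x, Summable fun y => J (x, y))
    (hcol : ∀ y, Summable fun x => J (x, y)) (A : Finset V) :
    Summable fun e => J e * (1 - edgeSpin A e) := by
  have row : ∀ a, Summable fun e : V × V => if e.1 = a then J e else 0 := fun a => by
    refine (Function.Injective.summable_iff (Prod.mk_right_injective a) ?_).1
      ((hrow a).congr fun y => by simp)
    rintro ⟨x, y⟩ he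
    exact if_neg fun h => he ⟨y, by simp [← h]⟩
  have col : ∀ a, Summable fun e : V × V => if e.2 = a then J e else 0 := fun a => by
    refine (Function.Injective.summable_iff (Prod.mk_left_injective a) ?_).1
      ((hcol a).congr fun y => by simp)
    rintro ⟨x, y⟩ he
    exact if_neg fun h => he ⟨x, by simp [← h]⟩
  refine .of_nonneg_of_le (fun e => mul_nonneg (hJ₀ e) ?_) (fun e => ?_)
    ((summable_sum fun a (_ : a ∈ A) => (row a).add (col a)).mul_left 2)
  · rcases edgeSpin_eq_one_or A e with h | h <;> norm_num [h]
  · have hJe : 0 ≤ J e := hJ₀ e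
    simp only [sum_add_distrib, sum_ite_eq, edgeSpin_eq]
    by_cases h₁ : e.1 ∈ A <;> by_cases h₂ : e.2 ∈ A <;> simp [h₁, h₂] <;> linarith

end Ising

section Clusters

open Finset

variable {V : Type*} [DecidableEq V] {θ : ℝ} {I A B : Finset V} {ω η : Finset (V × V)}

/-- The set `A ⊆ I` has density at least `θ` in `I` and is connected by the edges of `ω` inside
`I`. -/
def IsDenseCluster (θ : ℝ) (I : Finset V) (ω : Finset (V × V)) (A : Finset V) : Prop :=
  A ⊆ I ∧ θ * #I ≤ #A ∧ ConnectsSet (ω ∩ I ×ˢ I) A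

/-- The event that `I` is good: the open edges inside `I` connect a subset of density at
least `θ`. -/
def goodEvent (θ : ℝ) (I : Finset V) : Set (Finset (V × V)) := {ω | ∃ A, IsDenseCluster θ I ω A}

lemma ConnectsSet.biUnion_range {A : ℕ → Finset V} {n : ℕ} (hA : ∀ j < n, ConnectsSet ω (A j))
    (hinter : ∀ j, j + 1 < n → (A j ∩ A (j + 1)).Nonempty) :
    ConnectsSet ω ((range n).biUnion A) := by
  have key : ∀ i j, i ≤ j → j < n → ∀ x ∈ A i, ∀ y ∈ A j, Connects ω x y := by
    intro i j hij
    induction j, hij using Nat.le_induction with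
    | base => exact hA i
    | succ j _ ih =>
      intro hj x hx y hy
      obtain ⟨z, hz⟩ := hinter j hj
      rw [mem_inter] at hz
      exact (ih (by omega) x hx z hz.1).trans (hA (j + 1) hj z hz.2 y hy)
  intro x hx y hy
  simp only [mem_biUnion, mem_range] at hx hy
  obtain ⟨i, hi, hx⟩ := hx
  obtain ⟨j, hj, hy⟩ := hy
  rcases le_total i j with hij | hij
  · exact key i j hij hj x hx y hy
  · exact (key j i hij hi y hy x hx).symm

lemma ConnectsSet.union (hA : ConnectsSet ω A) (hB : ConnectsSet ω B) {x y : V} (hx : x ∈ A)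
    (hy : y ∈ B) (hxy : Connects ω x y) : ConnectsSet ω (A ∪ B) := by
  have key : ∀ z ∈ A ∪ B, Connects ω x z := fun z hz => by
    rcases mem_union.1 hz with hz | hz
    · exact hA x hx z hz
    · exact hxy.trans (hB y hy z hz)
  exact fun z hz z' hz' => (key z hz).symm.trans (key z' hz')

lemma IsDenseCluster.mono (h : ω ⊆ η) (hA : IsDenseCluster θ I ω A) : IsDenseCluster θ I η A :=
  ⟨hA.1, hA.2.1, hA.2.2.mono (inter_subset_inter_right h)⟩

lemma isUpperSet_goodEvent (θ : ℝ) (I : Finset V) : IsUpperSet (goodEvent θ I) :=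
  fun _ _ h ⟨A, hA⟩ => ⟨A, hA.mono h⟩

lemma union_mem_goodEvent_iff (h : Disjoint η (I ×ˢ I)) :
    ω ∪ η ∈ goodEvent θ I ↔ ω ∈ goodEvent θ I := by
  simp only [goodEvent, IsDenseCluster, Set.mem_ofPred_eq, union_inter_distrib_right,
    disjoint_iff_inter_eq_empty.1 h, union_empty]

end Clusters

section Chains

open Finset

variable {θ θ' : ℝ} {a : ℤ} {h n M : ℕ} {ω : Finset (ℤ × ℤ)} {X : Finset ℤ}

/-- The block of length `2 * h` starting at `a`. It is parametrized by half of its length because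
blocks of the same size are shifted by multiples of `h`, so that consecutive blocks overlap in half
of their sites. -/
def block (a : ℤ) (h : ℕ) : Finset ℤ := Ico a (a + 2 * h)

/-- The region covered by `n` consecutive overlapping blocks of length `2 * h`. -/
def chainRegion (a : ℤ) (h n : ℕ) : Finset ℤ := Ico a (a + (n + 1) * h)

/-- The set `X` behaves like the union of clusters of density `θ` of `n` consecutive overlapping
blocks: it is connected inside the region they cover and dense in any run of disjoint blocks. -/
def IsDenseChain (θ : ℝ) (a : ℤ) (h n : ℕ) (ω : Finset (ℤ × ℤ)) (X : Finset ℤ) : Prop :=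
  X ⊆ chainRegion a h n ∧
  ConnectsSet (ω ∩ chainRegion a h n ×ˢ chainRegion a h n) X ∧
  ∀ s r : ℕ, s + 2 * r ≤ n + 1 →
    r * (θ * (2 * h)) ≤ #(X ∩ Ico (a + s * h) (a + (s + 2 * r) * h))

lemma card_block (a : ℤ) (h : ℕ) : #(block a h) = 2 * h := by
  rw [block, Int.card_Ico]
  omega

lemma block_subset_chainRegion {j : ℕ} (hj : j < n) :
    block (a + j * h) h ⊆ chainRegion a h n := by
  have : ((j : ℤ) + 2) * h ≤ (n + 1) * h :=
    mul_le_mul_of_nonneg_right (by omega) (by positivity)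
  exact Ico_subset_Ico (by linarith [show (0 : ℤ) ≤ j * h by positivity]) (by linarith)

lemma chainRegion_subset_block {s : ℕ} (hs : s + n + 1 ≤ 2 * M) :
    chainRegion (a + s * h) h n ⊆ block a (M * h) := by
  have : ((s : ℤ) + n + 1) * h ≤ 2 * M * h := by gcongr; exact_mod_cast hs
  refine Ico_subset_Ico (by linarith [show (0 : ℤ) ≤ s * h by positivity]) ?_
  push_cast
  linarith

lemma initial_chainRegion_subset_block (hn : n + 1 ≤ 2 * M) :
    chainRegion a h n ⊆ block a (M * h) := by
  simpa using chainRegion_subset_block (a := a) (h := h) (s := 0) (n := n) (M := M) (by omega)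

lemma IsDenseCluster.inter_nonempty {A B : Finset ℤ} (hθ : 3 / 4 < θ) (hh : 0 < h)
    (hA : IsDenseCluster θ (block a h) ω A) (hB : IsDenseCluster θ (block (a + h) h) ω B) :
    (A ∩ B).Nonempty := by
  by_contra hAB
  rw [not_nonempty_iff_eq_empty, ← disjoint_iff_inter_eq_empty] at hAB
  have hsub : A ∪ B ⊆ Ico a (a + 3 * h) :=
    union_subset (hA.1.trans (Ico_subset_Ico le_rfl (by omega)))
      (hB.1.trans (Ico_subset_Ico (by omega) (by omega)))
  have hcard := card_le_card hsub
  rw [card_union_of_disjoint hAB, Int.card_Ico] at hcard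
  have hcard' : (#A : ℝ) + #B ≤ 3 * h := by exact_mod_cast hcard.trans (by omega)
  have hA₂ := hA.2.1
  have hB₂ := hB.2.1
  rw [card_block] at hA₂ hB₂
  push_cast at hA₂ hB₂
  have : 3 / 4 * (h : ℝ) < θ * h := mul_lt_mul_of_pos_right hθ (by exact_mod_cast hh)
  linarith

lemma le_card_biUnion_inter {A : ℕ → Finset ℤ}
    (hA : ∀ j < n, IsDenseCluster θ (block (a + j * h) h) ω (A j)) (s r : ℕ)
    (hsr : s + 2 * r ≤ n + 1) :
    r * (θ * (2 * h)) ≤ #((range n).biUnion A ∩ Ico (a + s * h) (a + (s + 2 * r) * h)) := by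
  have hsub : (range r).biUnion (fun i => A (s + 2 * i)) ⊆
      (range n).biUnion A ∩ Ico (a + s * h) (a + (s + 2 * r) * h) := by
    refine biUnion_subset.2 fun i hi => ?_
    rw [mem_range] at hi
    refine subset_inter (subset_biUnion_of_mem A (by rw [mem_range]; omega))
      ((hA _ (by omega)).1.trans (Ico_subset_Ico ?_ ?_)) <;> push_cast
    · linarith [show (0 : ℤ) ≤ 2 * i * h by positivity]
    · have : ((s : ℤ) + 2 * i + 2) * h ≤ (s + 2 * r) * h :=
        mul_le_mul_of_nonneg_right (by omega) (by positivity)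
      linarith
  have hdisj : Set.PairwiseDisjoint (range r) fun i => A (s + 2 * i) := by
    have hmono : Monotone fun i : ℕ => a + (s + 2 * i) * h := fun i j hij => by
      dsimp only
      gcongr
    intro i hi j hj hij
    rw [coe_range, Set.mem_Iio] at hi hj
    have hIco : ∀ i : ℕ, i < r →
        (A (s + 2 * i) : Set ℤ) ⊆ Set.Ico (a + (s + 2 * i) * h) (a + (s + 2 * (i + 1 : ℕ)) * h) :=
      fun i hi x hx => by
        have := mem_Ico.1 ((hA (s + 2 * i) (by omega)).1 hx)
        push_cast at this ⊢
        exact ⟨this.1, by linarith [this.2]⟩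
    exact disjoint_coe.1 ((hmono.pairwise_disjoint_on_Ico_succ hij).mono (hIco i hi) (hIco j hj))
  have hcard : ∀ i ∈ range r, θ * (2 * h) ≤ #(A (s + 2 * i)) := fun i hi => by
    rw [mem_range] at hi
    simpa [card_block] using (hA (s + 2 * i) (by omega)).2.1
  calc (r : ℝ) * (θ * (2 * h)) = #(range r) • (θ * (2 * h)) := by rw [card_range, nsmul_eq_mul]
    _ ≤ ∑ i ∈ range r, (#(A (s + 2 * i)) : ℝ) := card_nsmul_le_sum _ _ _ hcard
    _ = #((range r).biUnion fun i => A (s + 2 * i)) := by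
        rw [card_biUnion hdisj, Nat.cast_sum]
    _ ≤ _ := by exact_mod_cast card_le_card hsub

lemma isDenseChain_biUnion {A : ℕ → Finset ℤ} (hθ : 3 / 4 < θ) (hh : 0 < h)
    (hA : ∀ j < n, IsDenseCluster θ (block (a + j * h) h) ω (A j)) :
    IsDenseChain θ a h n ω ((range n).biUnion A) := by
  have hregion : ∀ j < n, block (a + j * h) h ⊆ chainRegion a h n :=
    fun j => block_subset_chainRegion
  refine ⟨biUnion_subset.2 fun j hj => (hA j (mem_range.1 hj)).1.trans (hregion j (mem_range.1 hj)),
    .biUnion_range (fun j hj => (hA j hj).2.2.mono <| inter_subset_inter_left <|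
      product_subset_product (hregion j hj) (hregion j hj)) fun j hj => ?_,
    le_card_biUnion_inter hA⟩
  have hsucc := hA (j + 1) hj
  rw [Nat.cast_succ, add_one_mul, ← add_assoc] at hsucc
  exact (hA j (by omega)).inter_nonempty hθ hh hsucc

lemma exists_isDenseChain (hθ : 3 / 4 < θ) (hh : 0 < h)
    (hω : ∀ j < n, ω ∈ goodEvent θ (block (a + j * h) h)) : ∃ X, IsDenseChain θ a h n ω X := by
  choose! A hA using hω
  exact ⟨_, isDenseChain_biUnion hθ hh hA⟩

lemma IsDenseChain.le_card (hX : IsDenseChain θ a h n ω X) {r : ℕ} (hr : 2 * r ≤ n + 1) :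
    r * (θ * (2 * h)) ≤ #X :=
  (hX.2.2 0 r (by omega)).trans (by exact_mod_cast card_le_card inter_subset_left)

lemma IsDenseChain.isDenseCluster {s N : ℕ} (hX : IsDenseChain θ (a + s * h) h n ω X)
    (hs : s + n + 1 ≤ 2 * M) (hN : 2 * N ≤ n + 1) (hNM : θ' * M ≤ N * θ) :
    IsDenseCluster θ' (block a (M * h)) ω X := by
  have hregion := chainRegion_subset_block (a := a) (h := h) hs
  refine ⟨hX.1.trans hregion, ?_, hX.2.1.mono <| inter_subset_inter_left <|
    product_subset_product hregion hregion⟩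
  calc θ' * #(block a (M * h)) = θ' * M * (2 * h) := by
        rw [card_block]
        push_cast
        ring
    _ ≤ N * θ * (2 * h) := by gcongr
    _ = N * (θ * (2 * h)) := by ring
    _ ≤ #X := hX.le_card hN

lemma mem_goodEvent_of_chain {s N : ℕ} (hθ : 3 / 4 < θ) (hh : 0 < h)
    (hω : ∀ j < n, ω ∈ goodEvent θ (block (a + s * h + j * h) h)) (hs : s + n + 1 ≤ 2 * M)
    (hN : 2 * N ≤ n + 1) (hNM : θ' * M ≤ N * θ) : ω ∈ goodEvent θ' (block a (M * h)) := by
  obtain ⟨X, hX⟩ := exists_isDenseChain hθ hh hω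
  exact ⟨X, hX.isDenseCluster hs hN hNM⟩

end Chains

section Interaction

open Finset

/-- The total interaction between `X` and `Y` for the coupling `1 / (y - x) ^ 2`. -/
def interaction (X Y : Finset ℤ) : ℝ := ∑ e ∈ X ×ˢ Y, 1 / ((e.2 : ℝ) - e.1) ^ 2

variable {X Y : Finset ℤ}

lemma card_mul_card_div_sq_le_interaction {D : ℝ}
    (hD : ∀ x ∈ X, ∀ y ∈ Y, 0 < (y : ℝ) - x ∧ (y : ℝ) - x ≤ D) :
    #X * #Y / D ^ 2 ≤ interaction X Y := by
  have hle : ∀ e ∈ X ×ˢ Y, 1 / D ^ 2 ≤ 1 / ((e.2 : ℝ) - e.1) ^ 2 := fun e he => by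
    obtain ⟨hpos, hle⟩ := hD e.1 (mem_product.1 he).1 e.2 (mem_product.1 he).2
    gcongr
  calc (#X * #Y / D ^ 2 : ℝ) = #(X ×ˢ Y) • (1 / D ^ 2) := by
        rw [card_product, nsmul_eq_mul, Nat.cast_mul, mul_one_div]
    _ ≤ interaction X Y := card_nsmul_le_sum _ _ _ hle

lemma sum_interaction_le {ι : Type*} (s : Finset ι) {A B : ι → Finset ℤ}
    (hA : ∀ i ∈ s, A i ⊆ X) (hB : ∀ i ∈ s, B i ⊆ Y) (hdisj : Set.PairwiseDisjoint s A) :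
    ∑ i ∈ s, interaction (A i) (B i) ≤ interaction X Y := by
  classical
  have hdisj' : Set.PairwiseDisjoint s fun i => A i ×ˢ B i :=
    fun i hi j hj hij => disjoint_product.2 (.inl (hdisj hi hj hij))
  calc ∑ i ∈ s, interaction (A i) (B i)
      = ∑ e ∈ s.biUnion fun i => A i ×ˢ B i, 1 / ((e.2 : ℝ) - e.1) ^ 2 := (sum_biUnion hdisj').symm
    _ ≤ interaction X Y := sum_le_sum_of_subset_of_nonneg
        (biUnion_subset.2 fun i hi => product_subset_product (hA i hi) (hB i hi))
        fun _ _ _ => by positivity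

lemma one_div_forty_le_interaction {u v w : ℤ} (hw : 0 < w) (huv : u ≤ v) (hvu : v ≤ u + w)
    (hX : X ⊆ Ico (u - 2 * w) (u - w)) (hY : Y ⊆ Ico (v + w) (v + 2 * w))
    (hXw : 7 / 8 * (w : ℝ) ≤ #X) (hYw : 7 / 8 * (w : ℝ) ≤ #Y) :
    (1 : ℝ) / 40 ≤ interaction X Y := by
  have : (0 : ℝ) < w := by exact_mod_cast hw
  have hdist : ∀ x ∈ X, ∀ y ∈ Y, 0 < (y : ℝ) - x ∧ (y : ℝ) - x ≤ 5 * w := fun x hx y hy => by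
    have hx := mem_Ico.1 (hX hx)
    have hy := mem_Ico.1 (hY hy)
    exact ⟨by exact_mod_cast (by linarith : 0 < y - x),
      by exact_mod_cast (by linarith : y - x ≤ 5 * w)⟩
  refine le_trans ?_ (card_mul_card_div_sq_le_interaction hdist)
  rw [le_div_iff₀ (by positivity)]
  calc 1 / 40 * (5 * (w : ℝ)) ^ 2 ≤ 7 / 8 * w * (7 / 8 * w) := by nlinarith
    _ ≤ #X * #Y := by gcongr

lemma div_forty_le_interaction {θ : ℝ} {u v : ℤ} {ℓ k : ℕ} (hθ : 7 / 8 ≤ θ) (hℓ : 0 < ℓ)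
    (huv : u ≤ v) (hvu : v ≤ u + ℓ)
    (hX : ∀ j < k, 2 ^ j * (θ * ℓ) ≤ #(X ∩ Ico (u - 2 ^ (j + 1) * ℓ) (u - 2 ^ j * ℓ)))
    (hY : ∀ j < k, 2 ^ j * (θ * ℓ) ≤ #(Y ∩ Ico (v + 2 ^ j * ℓ) (v + 2 ^ (j + 1) * ℓ))) :
    (k : ℝ) / 40 ≤ interaction X Y := by
  set A : ℕ → Finset ℤ := fun j => X ∩ Ico (u - 2 ^ (j + 1) * ℓ) (u - 2 ^ j * ℓ)
  set B : ℕ → Finset ℤ := fun j => Y ∩ Ico (v + 2 ^ j * ℓ) (v + 2 ^ (j + 1) * ℓ)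
  have hanti : Antitone fun j : ℕ => u - 2 ^ j * (ℓ : ℤ) := fun i j hij => by
    dsimp only
    gcongr
    norm_num
  have hdisj : Set.PairwiseDisjoint (range k : Set ℕ) A := fun i _ j _ hij =>
    disjoint_coe.1 <| (hanti.pairwise_disjoint_on_Ico_succ hij).mono
      (fun _ hx => mem_Ico.1 (mem_inter.1 hx).2) fun _ hx => mem_Ico.1 (mem_inter.1 hx).2
  have hscale : ∀ j ∈ range k, (1 : ℝ) / 40 ≤ interaction (A j) (B j) := fun j hj => by
    rw [mem_range] at hj
    have hle : (ℓ : ℤ) ≤ 2 ^ j * ℓ := le_mul_of_one_le_left (by positivity)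
      (one_le_pow₀ one_le_two)
    have hdouble : (2 : ℤ) ^ (j + 1) * ℓ = 2 * (2 ^ j * ℓ) := by ring
    have hdensity : 7 / 8 * ((2 ^ j * ℓ : ℤ) : ℝ) ≤ 2 ^ j * (θ * ℓ) := by
      push_cast
      rw [mul_left_comm]
      gcongr
    exact one_div_forty_le_interaction (by positivity) huv (hvu.trans (by linarith))
      (inter_subset_right.trans_eq (by rw [hdouble]))
      (inter_subset_right.trans_eq (by rw [hdouble]))
      (hdensity.trans (hX j hj)) (hdensity.trans (hY j hj))
  calc (k : ℝ) / 40 = #(range k) • (1 / 40 : ℝ) := by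
        rw [card_range, nsmul_eq_mul, mul_one_div]
    _ ≤ ∑ j ∈ range k, interaction (A j) (B j) := card_nsmul_le_sum _ _ _ hscale
    _ ≤ interaction X Y := sum_interaction_le _ (fun _ _ => inter_subset_left)
        (fun _ _ => inter_subset_left) hdisj

lemma IsDenseChain.div_forty_le_interaction {θ : ℝ} {a : ℤ} {h i n k : ℕ}
    {ω : Finset (ℤ × ℤ)} (hθ : 7 / 8 ≤ θ) (hh : 0 < h) (hX : IsDenseChain θ a h i ω X)
    (hY : IsDenseChain θ (a + (i + 2 : ℕ) * h) h n ω Y) (hi : 2 ^ (k + 1) ≤ i + 1)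
    (hn : 2 ^ (k + 1) ≤ n + 1) : (k : ℝ) / 40 ≤ interaction X Y := by
  have hpow : ∀ j < k, 4 * 2 ^ j ≤ 2 ^ (k + 1) := fun j hj =>
    calc 4 * 2 ^ j = 2 ^ (j + 2) := by ring
      _ ≤ 2 ^ (k + 1) := pow_le_pow_right₀ one_le_two (by omega)
  refine _root_.div_forty_le_interaction (u := a + (i + 1) * h) (v := a + (i + 2) * h)
    (ℓ := 2 * h) hθ (by omega) (by linarith) (by push_cast; linarith) (fun j hj => ?_)
    fun j hj => ?_
  · obtain ⟨s, hs⟩ := Nat.exists_eq_add_of_le' ((hpow j hj).trans hi)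
    have hs' : (i : ℤ) + 1 = s + 4 * 2 ^ j := by exact_mod_cast hs
    convert hX.2.2 s (2 ^ j) (by omega) using 5 <;> push_cast [hs'] <;> ring
  · convert hY.2.2 (2 * 2 ^ j) (2 ^ j) (by linarith [hpow j hj]) using 5 <;> push_cast <;> ring

end Interaction

section Dichotomy

open Finset

variable {θ θ' : ℝ} {a : ℤ} {h i n N M : ℕ} {ω η : Finset (ℤ × ℤ)} {X Y : Finset ℤ}

/-- The event that the first `i` overlapping blocks starting at `a`, and the `n` blocks that remain
after skipping the next two, are good. The two skipped blocks are the only ones that contain the gap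
between the regions of the two chains. -/
def goodFlanks (θ : ℝ) (a : ℤ) (h i n : ℕ) : Set (Finset (ℤ × ℤ)) :=
  {ω | (∀ j < i, ω ∈ goodEvent θ (block (a + j * h) h)) ∧
    ∀ j < n, ω ∈ goodEvent θ (block (a + (i + 2 : ℕ) * h + j * h) h)}

lemma IsDenseChain.mono (h' : ω ⊆ η) (hX : IsDenseChain θ a h n ω X) : IsDenseChain θ a h n η X :=
  ⟨hX.1, hX.2.1.mono (inter_subset_inter_right h'), hX.2.2⟩

lemma IsDenseChain.isDenseCluster_union (hθ : 0 ≤ θ) (hX : IsDenseChain θ a h i ω X)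
    (hY : IsDenseChain θ (a + (i + 2 : ℕ) * h) h n ω Y) (hM : i + n + 3 = 2 * M) (hN : N < M)
    (hNM : θ' * M ≤ N * θ) {x y : ℤ} (hx : x ∈ X) (hy : y ∈ Y) (hxy : (x, y) ∈ ω) :
    IsDenseCluster θ' (block a (M * h)) ω (X ∪ Y) := by
  have hleft : chainRegion a h i ⊆ block a (M * h) :=
    initial_chainRegion_subset_block (by omega)
  have hright : chainRegion (a + (i + 2 : ℕ) * h) h n ⊆ block a (M * h) :=
    chainRegion_subset_block (by omega)
  have hdisj : Disjoint X Y := disjoint_left.2 fun z hzX hzY => by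
    have hz := mem_Ico.1 (hX.1 hzX)
    have hz' := mem_Ico.1 (hY.1 hzY)
    push_cast at hz'
    linarith
  refine ⟨union_subset (hX.1.trans hleft) (hY.1.trans hright), ?_, .union
    (hX.2.1.mono <| inter_subset_inter_left <| product_subset_product hleft hleft)
    (hY.2.1.mono <| inter_subset_inter_left <| product_subset_product hright hright) hx hy <|
    .rel <| mem_inter.2 ⟨hxy, mem_product.2 ⟨hleft (hX.1 hx), hright (hY.1 hy)⟩⟩⟩
  have hfloor : (N : ℝ) ≤ ((i + 1) / 2 : ℕ) + ((n + 1) / 2 : ℕ) := by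
    exact_mod_cast (by omega : N ≤ (i + 1) / 2 + (n + 1) / 2)
  calc θ' * #(block a (M * h)) = θ' * M * (2 * h) := by
        rw [card_block]
        push_cast
        ring
    _ ≤ N * θ * (2 * h) := by gcongr
    _ ≤ (((i + 1) / 2 : ℕ) + ((n + 1) / 2 : ℕ)) * θ * (2 * h) := by gcongr
    _ = ((i + 1) / 2 : ℕ) * (θ * (2 * h)) + ((n + 1) / 2 : ℕ) * (θ * (2 * h)) := by ring
    _ ≤ #X + #Y := add_le_add (hX.le_card (by omega)) (hY.le_card (by omega))
    _ = #(X ∪ Y) := by rw [card_union_of_disjoint hdisj, Nat.cast_add]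

lemma forall_or_exists_two_or_exists_lone (P : ℕ → Prop) (n : ℕ) :
    (∀ i < n, P i) ∨ (∃ i j, i + 2 ≤ j ∧ j < n ∧ ¬ P i ∧ ¬ P j) ∨
      ∃ i < n, (∀ j < i, P j) ∧ ¬ P i ∧ ∀ j, i + 2 ≤ j → j < n → P j := by
  classical
  by_cases hex : ∃ i, i < n ∧ ¬ P i
  · obtain ⟨hlt, hi⟩ := Nat.find_spec hex
    have hmin : ∀ j < Nat.find hex, P j := fun j hj => by
      by_contra hPj
      exact Nat.find_min hex hj ⟨hj.trans hlt, hPj⟩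
    by_cases hright : ∀ j, Nat.find hex + 2 ≤ j → j < n → P j
    · exact .inr (.inr ⟨_, hlt, hmin, hi, hright⟩)
    · push Not at hright
      obtain ⟨j, hij, hj, hPj⟩ := hright
      exact .inr (.inl ⟨_, j, hij, hj, hi, hPj⟩)
  · push Not at hex
    exact .inl hex

lemma exists_bad_of_notMem_goodEvent {m : ℕ} (hθ : 3 / 4 < θ) (hh : 0 < h) (hM : N + m + 1 ≤ M)
    (hNM : θ' * M ≤ N * θ) (hω : ω ∉ goodEvent θ' (block a (M * h))) :
    (∃ i j : ℕ, i + 2 ≤ j ∧ j + 1 < 2 * M ∧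
      ω ∉ goodEvent θ (block (a + i * h) h) ∧ ω ∉ goodEvent θ (block (a + j * h) h)) ∨
    ∃ i n, i + n + 3 = 2 * M ∧ 2 * m ≤ i ∧ 2 * m ≤ n ∧
      ω ∉ goodEvent θ (block (a + i * h) h) ∧ ω ∈ goodFlanks θ a h i n := by
  have hrun : ∀ s n : ℕ, s + n + 1 ≤ 2 * M → 2 * N ≤ n + 1 →
      ¬ ∀ j : ℕ, s ≤ j → j < s + n → ω ∈ goodEvent θ (block (a + j * h) h) := by
    refine fun s n hs hn hgood => hω (mem_goodEvent_of_chain hθ hh (fun j hj => ?_) hs hn hNM)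
    convert hgood (s + j) (by omega) (by omega) using 3
    push_cast
    ring
  rcases forall_or_exists_two_or_exists_lone
    (fun i : ℕ => ω ∈ goodEvent θ (block (a + i * h) h)) (2 * M - 1) with
    hall | ⟨i, j, hij, hj, hbad⟩ | ⟨i, hi, hleft, hbad, hright⟩
  · exact absurd (fun j _ hj => hall j (by omega))
      (hrun 0 (2 * M - 1) (by omega) (by omega))
  · exact .inl ⟨i, j, hij, by omega, hbad⟩
  · have hi₁ : 2 * m ≤ i := by
      by_contra hlt
      exact hrun (i + 2) (2 * M - (i + 3)) (by omega) (by omega)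
        fun j hj hj' => hright j hj (by omega)
    have hi₂ : i + 2 * m + 3 ≤ 2 * M := by
      by_contra hlt
      exact hrun 0 i (by omega) (by omega) fun j _ hj => hleft j (by omega)
    refine .inr ⟨i, 2 * M - (i + 3), by omega, hi₁, by omega, hbad, hleft, fun j hj => ?_⟩
    convert hright (i + 2 + j) (by omega) (by omega) using 3
    push_cast
    ring

end Dichotomy

section BadProbability

open Finset

variable {V : Type*} [DecidableEq V] {p : V × V → unitInterval} {θ : ℝ} {I I' K : Finset V}

/-- The probability that `I` is bad, i.e. that its open edges connect no subset of density at
least `θ`. -/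
def badProb (p : V × V → unitInterval) (θ : ℝ) (I : Finset V) : ℝ :=
  percProb p (I ×ˢ I) (goodEvent θ I)ᶜ

lemma percProb_compl_goodEvent_le {F : Finset (V × V)} (hF : I ×ˢ I ⊆ F) :
    percProb p F (goodEvent θ I)ᶜ ≤ badProb p θ I :=
  percProb_anti (isUpperSet_goodEvent θ I).compl hF

lemma percProb_bad_inter_bad_le (hI : I ⊆ K) (hI' : I' ⊆ K) (hdisj : Disjoint I I') :
    percProb p (K ×ˢ K) ((goodEvent θ I)ᶜ ∩ (goodEvent θ I')ᶜ) ≤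
      badProb p θ I * badProb p θ I' :=
  (percProb_inter_le_mul (isUpperSet_goodEvent θ I).compl (isUpperSet_goodEvent θ I').compl
    (product_subset_product hI hI)).trans <|
    mul_le_mul_of_nonneg_left (percProb_compl_goodEvent_le <| subset_sdiff.2
      ⟨product_subset_product hI' hI', disjoint_product.2 (.inl hdisj.symm)⟩) percProb_nonneg

end BadProbability

section Renormalization

open Finset

variable {p : ℤ × ℤ → unitInterval} {b θ θ' : ℝ} {a : ℤ} {h i n k N M : ℕ}
  {ω η : Finset (ℤ × ℤ)}

/-- The percolation with edge probabilities `p` dominates the one in which the edge `(x, y)`,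
`x < y`, is closed with probability `exp (-b / (y - x) ^ 2)`. -/
def DominatesInverseSquare (p : ℤ × ℤ → unitInterval) (b : ℝ) : Prop :=
  ∀ x y : ℤ, x < y → 1 - (p (x, y) : ℝ) ≤ Real.exp (-(b * (1 / ((y : ℝ) - x) ^ 2)))

lemma percProb_disjoint_product_le {X Y : Finset ℤ} {S : Finset (ℤ × ℤ)}
    (hp : DominatesInverseSquare p b) (hXY : ∀ x ∈ X, ∀ y ∈ Y, x < y) (hS : X ×ˢ Y ⊆ S) :
    percProb p S {ω | Disjoint ω (X ×ˢ Y)} ≤ Real.exp (-(b * interaction X Y)) := by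
  rw [percProb_disjoint hS, interaction, mul_sum, ← sum_neg_distrib, Real.exp_sum]
  refine prod_le_prod (fun e _ => sub_nonneg.2 (p e).2.2) fun e he => hp e.1 e.2 ?_
  exact hXY e.1 (mem_product.1 he).1 e.2 (mem_product.1 he).2

/-- The edges over the gap between the two flanks of `goodFlanks θ a h i n`. -/
def gapEdges (a : ℤ) (h i n : ℕ) : Finset (ℤ × ℤ) :=
  chainRegion a h i ×ˢ chainRegion (a + (i + 2 : ℕ) * h) h n

lemma lt_of_mem_gapEdges (hh : 0 < h) {e : ℤ × ℤ} (he : e ∈ gapEdges a h i n) : e.1 < e.2 := by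
  have he₁ := mem_Ico.1 (mem_product.1 he).1
  have he₂ := mem_Ico.1 (mem_product.1 he).2
  push_cast at he₂
  linarith [show (0 : ℤ) < h by exact_mod_cast hh]

lemma disjoint_gapEdges (η : Finset (ℤ × ℤ)) (hη : η ⊆ gapEdges a h i n) (j : ℕ) :
    Disjoint η (block (a + j * h) h ×ˢ block (a + j * h) h) := by
  refine disjoint_left.2 fun e he he' => ?_
  have hgap := mem_product.1 (hη he)
  have hblock := mem_product.1 he'
  have he₁ := mem_Ico.1 hgap.1
  have he₂ := mem_Ico.1 hgap.2
  have he₁' := mem_Ico.1 hblock.1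
  have he₂' := mem_Ico.1 hblock.2
  push_cast at he₂
  have hij : (i : ℤ) * h < j * h := by linarith
  have hji : (j : ℤ) * h < (i + 1) * h := by linarith
  have := lt_of_mul_lt_mul_right hij (by positivity)
  have := lt_of_mul_lt_mul_right hji (by positivity)
  omega

lemma union_mem_goodFlanks_iff (hη : η ⊆ gapEdges a h i n) :
    ω ∪ η ∈ goodFlanks θ a h i n ↔ ω ∈ goodFlanks θ a h i n := by
  have hright : ∀ j : ℕ, a + (i + 2 : ℕ) * h + j * h = a + (i + 2 + j : ℕ) * h := fun j => by
    push_cast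
    ring
  simp only [goodFlanks, Set.mem_ofPred_eq, hright,
    union_mem_goodEvent_iff (disjoint_gapEdges η hη _)]

lemma percProb_flanks_not_joined_le (hp : DominatesInverseSquare p b) (hb : 0 ≤ b)
    (hθ : 7 / 8 ≤ θ) (hh : 0 < h) (hNM : θ' * M ≤ N * θ) (hN : N < M) (hM : i + n + 3 = 2 * M)
    (hi : 2 ^ (k + 1) ≤ i + 1) (hn : 2 ^ (k + 1) ≤ n + 1) (hω : ω ∈ goodFlanks θ a h i n) :
    percProb p (gapEdges a h i n) {η | ω ∪ η ∉ goodEvent θ' (block a (M * h))} ≤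
      Real.exp (-(b * (k / 40))) := by
  have hθ' : 3 / 4 < θ := by linarith
  obtain ⟨X, hX⟩ := exists_isDenseChain hθ' hh hω.1
  obtain ⟨Y, hY⟩ := exists_isDenseChain hθ' hh hω.2
  have hXY : X ×ˢ Y ⊆ gapEdges a h i n := product_subset_product hX.1 hY.1
  have hlt : ∀ x ∈ X, ∀ y ∈ Y, x < y := fun x hx y hy =>
    lt_of_mem_gapEdges hh (hXY (mk_mem_product hx hy))
  have hclosed : ∀ η ⊆ gapEdges a h i n, ω ∪ η ∉ goodEvent θ' (block a (M * h)) →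
      Disjoint η (X ×ˢ Y) := fun η _ hbad => disjoint_left.2 fun e he heXY => hbad
    ⟨_, (hX.mono subset_union_left).isDenseCluster_union (by linarith)
      (hY.mono subset_union_left) hM hN hNM (mem_product.1 heXY).1 (mem_product.1 heXY).2
      (mem_union_right ω he)⟩
  calc percProb p (gapEdges a h i n) {η | ω ∪ η ∉ goodEvent θ' (block a (M * h))}
      ≤ percProb p (gapEdges a h i n) {η | Disjoint η (X ×ˢ Y)} := percProb_mono hclosed
    _ ≤ Real.exp (-(b * interaction X Y)) := percProb_disjoint_product_le hp hlt hXY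
    _ ≤ Real.exp (-(b * (k / 40))) := by
        gcongr
        exact hX.div_forty_le_interaction hθ hh hY hi hn

lemma percProb_lone_bad_le (hp : DominatesInverseSquare p b) (hb : 0 ≤ b)
    (hθ : 7 / 8 ≤ θ) (hh : 0 < h) (hNM : θ' * M ≤ N * θ) (hN : N < M) (hM : i + n + 3 = 2 * M)
    (hi : 2 ^ (k + 1) ≤ i + 1) (hn : 2 ^ (k + 1) ≤ n + 1) :
    percProb p (block a (M * h) ×ˢ block a (M * h))
        ((goodEvent θ (block (a + i * h) h))ᶜ ∩ goodFlanks θ a h i n ∩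
          (goodEvent θ' (block a (M * h)))ᶜ) ≤
      Real.exp (-(b * (k / 40))) * badProb p θ (block (a + i * h) h) := by
  set B := block (a + i * h) h
  set K := block a (M * h)
  have hB : B ⊆ K := (block_subset_chainRegion (n := i + 1) (by omega)).trans
    (initial_chainRegion_subset_block (by omega))
  have hgap : gapEdges a h i n ⊆ K ×ˢ K := product_subset_product
    (initial_chainRegion_subset_block (by omega)) (chainRegion_subset_block (by omega))
  have hcond : ∀ ω ⊆ K ×ˢ K \ gapEdges a h i n, percProb p (gapEdges a h i n)
      {η | ω ∪ η ∈ (goodEvent θ B)ᶜ ∩ goodFlanks θ a h i n ∩ (goodEvent θ' K)ᶜ} ≤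
        (goodEvent θ B)ᶜ.indicator (fun _ => Real.exp (-(b * (k / 40)))) ω := by
    intro ω _
    by_cases hω : ω ∈ (goodEvent θ B)ᶜ ∩ goodFlanks θ a h i n
    · rw [Set.indicator_of_mem hω.1]
      exact (percProb_mono fun η _ hη => hη.2).trans
        (percProb_flanks_not_joined_le hp hb hθ hh hNM hN hM hi hn hω.2)
    · refine (percProb_mono (R := ∅) fun η hη hη' => hω ?_).trans ?_
      · exact ⟨fun hgood => hη'.1.1 (isUpperSet_goodEvent θ B subset_union_left hgood),
          (union_mem_goodFlanks_iff hη).1 hη'.1.2⟩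
      · rw [percProb_empty]
        exact Set.indicator_nonneg (fun _ _ => (Real.exp_pos _).le) ω
  refine (percProb_le_mul hgap hcond).trans ?_
  gcongr
  exact percProb_compl_goodEvent_le
    (subset_sdiff.2 ⟨product_subset_product hB hB, (disjoint_gapEdges _ subset_rfl i).symm⟩)

end Renormalization

section RenormalizationStep

open Finset

variable {p : ℤ × ℤ → unitInterval} {b θ θ' q : ℝ} {a : ℤ} {h k N M : ℕ}

lemma percProb_two_bad_le {i j : ℕ} (hij : i + 2 ≤ j) (hj : j + 1 < 2 * M)
    (hq : ∀ j : ℕ, badProb p θ (block (a + j * h) h) ≤ q) :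
    percProb p (block a (M * h) ×ˢ block a (M * h))
      ((goodEvent θ (block (a + i * h) h))ᶜ ∩ (goodEvent θ (block (a + j * h) h))ᶜ) ≤ q ^ 2 := by
  have hsub : ∀ l : ℕ, l + 1 < 2 * M → block (a + l * h) h ⊆ block a (M * h) := fun l hl =>
    (block_subset_chainRegion (Nat.lt_succ_self l)).trans
      (initial_chainRegion_subset_block (by omega))
  have hdisj : Disjoint (block (a + i * h) h) (block (a + j * h) h) :=
    disjoint_left.2 fun x hxi hxj => by
      have hle : ((i : ℤ) + 2) * h ≤ j * h :=
        mul_le_mul_of_nonneg_right (by omega) (by positivity)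
      linarith [(mem_Ico.1 hxi).2, (mem_Ico.1 hxj).1]
  calc _ ≤ badProb p θ (block (a + i * h) h) * badProb p θ (block (a + j * h) h) :=
        percProb_bad_inter_bad_le (hsub i (by omega)) (hsub j hj) hdisj
    _ ≤ q * q := mul_le_mul (hq i) (hq j) percProb_nonneg (percProb_nonneg.trans (hq i))
    _ = q ^ 2 := (sq q).symm

/-- The pairs of non-overlapping blocks among the `2 * M - 1` sub-blocks of a block. -/
def separatedPairs (M : ℕ) : Finset (ℕ × ℕ) :=
  {ij ∈ range (2 * M) ×ˢ range (2 * M) | ij.1 + 2 ≤ ij.2 ∧ ij.2 + 1 < 2 * M}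

/-- The possible lengths, both at least `l`, of the two flanks of a gap inside a block which has
`2 * M - 1` sub-blocks. -/
def flankLengths (M l : ℕ) : Finset (ℕ × ℕ) :=
  {ij ∈ antidiagonal (2 * M - 3) | l ≤ ij.1 ∧ l ≤ ij.2}

lemma card_separatedPairs_le (M : ℕ) : #(separatedPairs M) ≤ (2 * M) ^ 2 := by
  refine (card_filter_le _ _).trans_eq ?_
  rw [card_product, card_range, sq]

lemma card_flankLengths_le {l : ℕ} (hM : 1 ≤ M) : #(flankLengths M l) ≤ 2 * M := by
  have hcard := card_filter_le (antidiagonal (2 * M - 3)) fun ij => l ≤ ij.1 ∧ l ≤ ij.2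
  rw [Nat.card_antidiagonal] at hcard
  exact hcard.trans (by omega)

lemma compl_goodEvent_subset {m : ℕ} (hθ : 3 / 4 < θ) (hh : 0 < h) (hM : N + m + 1 ≤ M)
    (hNM : θ' * M ≤ N * θ) :
    (goodEvent θ' (block a (M * h)))ᶜ ⊆
      (⋃ ij ∈ separatedPairs M,
        (goodEvent θ (block (a + ij.1 * h) h))ᶜ ∩ (goodEvent θ (block (a + ij.2 * h) h))ᶜ) ∪
      ⋃ ij ∈ flankLengths M (2 * m), (goodEvent θ (block (a + ij.1 * h) h))ᶜ ∩
        goodFlanks θ a h ij.1 ij.2 ∩ (goodEvent θ' (block a (M * h)))ᶜ := by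
  intro ω hω
  rcases exists_bad_of_notMem_goodEvent hθ hh hM hNM hω with
    ⟨i, j, hij, hj, hi', hj'⟩ | ⟨i, n, hin, hi, hn, hi', hflanks⟩
  · refine .inl (Set.mem_biUnion (x := (i, j)) ?_ ⟨hi', hj'⟩)
    simp only [separatedPairs, coe_filter, mem_product, mem_range, Set.mem_ofPred_eq]
    omega
  · refine .inr (Set.mem_biUnion (x := (i, n)) ?_ ⟨⟨hi', hflanks⟩, hω⟩)
    simp only [flankLengths, coe_filter, HasAntidiagonal.mem_antidiagonal, Set.mem_ofPred_eq]
    omega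

lemma badProb_renormalize (hp : DominatesInverseSquare p b) (hb : 0 ≤ b) (hθ : 7 / 8 ≤ θ)
    (hh : 0 < h) (hM : N + 2 ^ k + 1 ≤ M) (hNM : θ' * M ≤ N * θ)
    (hq : ∀ j : ℕ, badProb p θ (block (a + j * h) h) ≤ q) :
    badProb p θ' (block a (M * h)) ≤
      (2 * M) ^ 2 * q ^ 2 + 2 * M * (Real.exp (-(b * (k / 40))) * q) := by
  have hk : 1 ≤ 2 ^ k := Nat.one_le_two_pow
  have hq₀ : 0 ≤ q := percProb_nonneg.trans (hq 0)
  have hseparated : (#(separatedPairs M) : ℝ) ≤ (2 * M) ^ 2 := by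
    exact_mod_cast card_separatedPairs_le M
  have hflanks : (#(flankLengths M (2 * 2 ^ k)) : ℝ) ≤ 2 * M := by
    exact_mod_cast card_flankLengths_le (by omega)
  refine (percProb_mono fun ω _ hω => compl_goodEvent_subset (by linarith) hh hM hNM hω).trans <|
    percProb_union_le.trans <| add_le_add ?_ ?_
  · refine (percProb_biUnion_le _ fun ij hij => ?_).trans (by gcongr)
    rw [separatedPairs, mem_filter] at hij
    exact percProb_two_bad_le hij.2.1 hij.2.2 hq
  · refine (percProb_biUnion_le _ fun ij hij => ?_).trans (by gcongr)
    rw [flankLengths, mem_filter, HasAntidiagonal.mem_antidiagonal, ← pow_succ'] at hij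
    exact (percProb_lone_bad_le (k := k) hp hb hθ hh hNM (by omega) (by omega) (by omega)
      (by omega)).trans (mul_le_mul_of_nonneg_left (hq ij.1) (Real.exp_pos _).le)

end RenormalizationStep

section Rooted

open Finset

variable {V : Type*} [DecidableEq V] {p : V × V → unitInterval} {θ : ℝ} {I Λ : Finset V}
  {o : V}

/-- The event that `o` lies in a connected subset of `I` of density at least `θ`. -/
def rootedEvent (θ : ℝ) (I : Finset V) (o : V) : Set (Finset (V × V)) :=
  {ω | ∃ A, IsDenseCluster θ I ω A ∧ o ∈ A}

/-- The probability that `o` lies in no connected subset of `I` of density at least `θ`. -/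
def unrootedProb (p : V × V → unitInterval) (θ : ℝ) (I : Finset V) (o : V) : ℝ :=
  percProb p (I ×ˢ I) (rootedEvent θ I o)ᶜ

lemma isUpperSet_rootedEvent (θ : ℝ) (I : Finset V) (o : V) : IsUpperSet (rootedEvent θ I o) :=
  fun _ _ h ⟨A, hA, ho⟩ => ⟨A, hA.mono h, ho⟩

lemma badProb_le_unrootedProb (p : V × V → unitInterval) (θ : ℝ) (I : Finset V) (o : V) :
    badProb p θ I ≤ unrootedProb p θ I o :=
  percProb_mono fun _ _ hbad ⟨A, hA, _⟩ => hbad ⟨A, hA⟩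

lemma rootedEvent_subset_connectsToCompl (hΛ : #Λ < θ * #I) :
    rootedEvent θ I o ⊆ connectsToCompl o Λ := by
  rintro ω ⟨A, ⟨-, hcard, hconn⟩, ho⟩
  have hA : ¬ A ⊆ Λ := fun hsub => by
    have : (#A : ℝ) ≤ #Λ := by exact_mod_cast card_le_card hsub
    linarith
  obtain ⟨x, hxA, hxΛ⟩ := not_subset.1 hA
  exact ⟨x, hxΛ, (hconn o ho x hxA).mono inter_subset_left⟩

lemma one_sub_unrootedProb_le (hΛ : #Λ < θ * #I) :
    1 - unrootedProb p θ I o ≤ percProb p (I ×ˢ I) (connectsToCompl o Λ) := by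
  rw [unrootedProb, percProb_compl, sub_sub_cancel]
  exact percProb_mono fun _ _ hω => rootedEvent_subset_connectsToCompl hΛ hω

end Rooted

section RootedRenormalization

open Finset

variable {p : ℤ × ℤ → unitInterval} {θ θ' q : ℝ} {a o : ℤ} {h n N M : ℕ} {ω : Finset (ℤ × ℤ)}

lemma exists_isDenseChain_of_rooted (hθ : 3 / 4 < θ) (hh : 0 < h) (hn : 0 < n)
    (hroot : ω ∈ rootedEvent θ (block a h) o)
    (hω : ∀ j < n, ω ∈ goodEvent θ (block (a + j * h) h)) :
    ∃ X, IsDenseChain θ a h n ω X ∧ o ∈ X := by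
  obtain ⟨A₀, hA₀, ho⟩ := hroot
  choose! A hA using hω
  refine ⟨(range n).biUnion (Function.update A 0 A₀),
    isDenseChain_biUnion hθ hh fun j hj => ?_, mem_biUnion.2 ⟨0, mem_range.2 hn, by simpa⟩⟩
  rcases eq_or_ne j 0 with rfl | hj₀
  · simpa using hA₀
  · rw [Function.update_of_ne hj₀]
    exact hA j hj

lemma mem_rootedEvent_of_chain (hθ : 3 / 4 < θ) (hh : 0 < h) (hNM : θ' * M ≤ N * θ) (hN : N < M)
    (hroot : ω ∈ rootedEvent θ (block a h) o)
    (hω : ∀ j < 2 * M - 1, ω ∈ goodEvent θ (block (a + j * h) h)) :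
    ω ∈ rootedEvent θ' (block a (M * h)) o := by
  obtain ⟨X, hX, ho⟩ := exists_isDenseChain_of_rooted hθ hh (by omega) hroot hω
  refine ⟨X, ?_, ho⟩
  have hX' : IsDenseChain θ (a + (0 : ℕ) * h) h (2 * M - 1) ω X := by simpa using hX
  exact hX'.isDenseCluster (by omega) (by omega) hNM

lemma unrootedProb_renormalize (hθ : 3 / 4 < θ) (hh : 0 < h) (hNM : θ' * M ≤ N * θ) (hN : N < M)
    (hq : ∀ j : ℕ, badProb p θ (block (a + j * h) h) ≤ q) :
    unrootedProb p θ' (block a (M * h)) o ≤ unrootedProb p θ (block a h) o + 2 * M * q := by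
  set K := block a (M * h)
  have hsub : ∀ j < 2 * M - 1, block (a + j * h) h ×ˢ block (a + j * h) h ⊆ K ×ˢ K := fun j hj =>
    have h := (block_subset_chainRegion hj).trans (initial_chainRegion_subset_block (by omega))
    product_subset_product h h
  have hroot : block a h ×ˢ block a h ⊆ K ×ˢ K := by simpa using hsub 0 (by omega)
  have hcover : ∀ ω ⊆ K ×ˢ K, ω ∈ (rootedEvent θ' K o)ᶜ → ω ∈ (rootedEvent θ (block a h) o)ᶜ ∪
      ⋃ j ∈ range (2 * M - 1), (goodEvent θ (block (a + j * h) h))ᶜ := fun ω _ hω => by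
    by_contra hcon
    simp only [Set.mem_union, Set.mem_iUnion, Set.mem_compl_iff, not_or, not_exists, not_not,
      mem_range] at hcon
    exact hω (mem_rootedEvent_of_chain hθ hh hNM hN hcon.1 hcon.2)
  have hcard : (#(range (2 * M - 1)) : ℝ) ≤ 2 * M := by
    rw [card_range]
    exact_mod_cast Nat.sub_le _ _
  have hq₀ : 0 ≤ q := percProb_nonneg.trans (hq 0)
  refine (percProb_mono hcover).trans <| percProb_union_le.trans <| add_le_add
    (percProb_anti (isUpperSet_rootedEvent _ _ _).compl hroot) ?_
  refine (percProb_biUnion_le _ fun j hj => ?_).trans (by gcongr)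
  exact (percProb_compl_goodEvent_le (hsub j (mem_range.1 hj))).trans (hq j)

end RootedRenormalization

section Scales

open Finset

variable {p : ℤ × ℤ → unitInterval} {b δ : ℝ}

/-- The number `s` for the passage from blocks of scale `n` to blocks of scale `n + 1`, which are
`s ^ 2` times longer; a flank with fewer than `2 * s` sub-blocks is sacrificed. -/
def scale (n : ℕ) : ℕ := 2 ^ (n + 5)

/-- Half of the length of the blocks of scale `n`. -/
def halfLen : ℕ → ℕ
  | 0 => 1
  | n + 1 => scale n ^ 2 * halfLen n

/-- The density required of the clusters of scale `n`. It decreases from `1` to `7 / 8`. -/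
def density (n : ℕ) : ℝ := 7 / 8 + 4 / scale n

lemma scale_succ (n : ℕ) : scale (n + 1) = 2 * scale n := by
  rw [scale, scale]
  ring

lemma le_scale (n : ℕ) : 32 ≤ scale n :=
  calc 32 = 2 ^ 5 := by norm_num
    _ ≤ 2 ^ (n + 5) := pow_le_pow_right₀ one_le_two (by omega)

lemma lt_halfLen (n : ℕ) : n < halfLen n := by
  induction n with
  | zero => exact Nat.one_pos
  | succ n ih =>
    calc n + 1 ≤ halfLen n := ih
      _ < scale n ^ 2 * halfLen n :=
        lt_mul_of_one_lt_left (by omega) (Nat.one_lt_pow two_ne_zero (by linarith [le_scale n]))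

lemma density_zero : density 0 = 1 := by
  norm_num [density, scale]

lemma le_density (n : ℕ) : 7 / 8 ≤ density n :=
  le_add_of_nonneg_right (by positivity)

lemma exists_density_succ_mul_le (n : ℕ) : ∃ N : ℕ, N + scale n + 1 ≤ scale n ^ 2 ∧
    density (n + 1) * (scale n ^ 2 : ℕ) ≤ N * density n := by
  obtain ⟨y, hy⟩ := Nat.exists_eq_add_of_le' (le_scale n)
  refine ⟨scale n * (y + 30), by rw [hy]; ring_nf; omega, ?_⟩
  have hs : (scale n : ℝ) = y + 32 := by exact_mod_cast hy
  rw [density, density, scale_succ]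
  push_cast
  rw [hs]
  field_simp
  nlinarith

lemma exp_neg_le_one_div_scale (hb : Real.exp (-(b / 40)) ≤ 1 / 64) (n : ℕ) :
    Real.exp (-(b * ((n + 5 : ℕ) / 40))) ≤ 1 / scale n ^ 6 :=
  calc Real.exp (-(b * ((n + 5 : ℕ) / 40))) = Real.exp (-(b / 40)) ^ (n + 5) := by
        rw [← Real.exp_nat_mul]
        ring_nf
    _ ≤ (1 / 64) ^ (n + 5) := by gcongr
    _ = 1 / scale n ^ 6 := by
        rw [scale, one_div_pow, Nat.cast_pow, ← pow_mul, mul_comm, pow_mul]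
        norm_num

lemma badProb_recursion_le {x κ : ℝ} (hx : 32 ≤ x) (hδ : 0 ≤ δ) (hδ₁ : δ ≤ 1)
    (hκ : κ ≤ 1 / x ^ 6) :
    (2 * x ^ 2) ^ 2 * (δ / x ^ 6) ^ 2 + 2 * x ^ 2 * (κ * (δ / x ^ 6)) ≤ δ / (2 * x) ^ 6 := by
  have : 0 < x := by linarith
  calc (2 * x ^ 2) ^ 2 * (δ / x ^ 6) ^ 2 + 2 * x ^ 2 * (κ * (δ / x ^ 6))
      ≤ (2 * x ^ 2) ^ 2 * (δ / x ^ 6) ^ 2 + 2 * x ^ 2 * (1 / x ^ 6 * (δ / x ^ 6)) := by gcongr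
    _ = δ / x ^ 6 * (4 * δ * (1 / x) ^ 2 + 2 * (1 / x) ^ 4) := by
        field_simp
        ring
    _ ≤ δ / x ^ 6 * (4 * 1 * (1 / 32) ^ 2 + 2 * (1 / 32) ^ 4) := by gcongr
    _ ≤ δ / x ^ 6 * (1 / 64) := by gcongr; norm_num
    _ = δ / (2 * x) ^ 6 := by
        field_simp
        norm_num

lemma mem_rootedEvent_unit_block {ω : Finset (ℤ × ℤ)} {a : ℤ} (he : (a, a + 1) ∈ ω) :
    ω ∈ rootedEvent 1 (block a 1) a := by
  have ha : a ∈ block a 1 := by simp [block]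
  have hedge : Connects (ω ∩ block a 1 ×ˢ block a 1) a (a + 1) :=
    .rel (mem_inter.2 ⟨he, mem_product.2 ⟨ha, by simp [block]⟩⟩)
  have hblock : ∀ x ∈ block a 1, Connects (ω ∩ block a 1 ×ˢ block a 1) a x := fun x hx => by
    have hx : a ≤ x ∧ x < a + 2 := by simpa [block] using hx
    rcases (by omega : x = a ∨ x = a + 1) with rfl | rfl
    exacts [.refl _, hedge]
  exact ⟨block a 1, ⟨subset_rfl, (one_mul _).le,
    fun x hx y hy => (hblock x hx).symm.trans (hblock y hy)⟩, ha⟩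

lemma unrootedProb_unit_block_le (hp : DominatesInverseSquare p b) (a : ℤ) :
    unrootedProb p 1 (block a 1) a ≤ Real.exp (-b) := by
  have hmem : {a} ×ˢ {a + 1} ⊆ block a 1 ×ˢ block a 1 :=
    product_subset_product (by simp [block]) (by simp [block])
  refine (percProb_mono fun ω _ hω => ?_).trans
    ((percProb_disjoint_product_le hp (by simp) hmem).trans_eq (by simp [interaction]))
  rw [singleton_product_singleton]
  exact disjoint_singleton_right.2 fun he => hω (mem_rootedEvent_unit_block he)

lemma exp_neg_le_div_pow (hδ : 0 ≤ δ) (hδ₁ : δ ≤ 1) (hbδ : Real.exp (-(b / 40)) ≤ δ / 64) :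
    Real.exp (-b) ≤ δ / 32 ^ 6 :=
  calc Real.exp (-b) = Real.exp (-(b / 40)) ^ 40 := by
        rw [← Real.exp_nat_mul]
        ring_nf
    _ ≤ (δ / 64) ^ 40 := by gcongr
    _ = δ ^ 40 / 64 ^ 40 := div_pow _ _ _
    _ ≤ δ / 32 ^ 6 := by
        gcongr
        · exact pow_le_of_le_one hδ hδ₁ (by norm_num)
        · norm_num

lemma badProb_block_le (hp : DominatesInverseSquare p b) (hb : 0 ≤ b) (hδ : 0 ≤ δ) (hδ₁ : δ ≤ 1)
    (hbδ : Real.exp (-(b / 40)) ≤ δ / 64) (n : ℕ) (a : ℤ) :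
    badProb p (density n) (block a (halfLen n)) ≤ δ / scale n ^ 6 := by
  induction n generalizing a with
  | zero =>
    rw [density_zero, halfLen]
    calc badProb p 1 (block a 1) ≤ unrootedProb p 1 (block a 1) a := badProb_le_unrootedProb ..
      _ ≤ Real.exp (-b) := unrootedProb_unit_block_le hp a
      _ ≤ δ / 32 ^ 6 := exp_neg_le_div_pow hδ hδ₁ hbδ
      _ = δ / scale 0 ^ 6 := by norm_num [scale]
  | succ n ih =>
    obtain ⟨N, hN, hdensity⟩ := exists_density_succ_mul_le n
    have hκ := exp_neg_le_one_div_scale (hbδ.trans (by gcongr)) n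
    have hx : (32 : ℝ) ≤ scale n := by exact_mod_cast le_scale n
    have hstep := badProb_renormalize hp hb (le_density n) (Nat.zero_lt_of_lt (lt_halfLen n)) hN
      hdensity fun j => ih (a + j * halfLen n)
    have hrec := badProb_recursion_le hx hδ hδ₁ hκ
    rw [halfLen, scale_succ]
    push_cast at hstep hrec ⊢
    exact hstep.trans hrec

lemma unrootedProb_block_le (hp : DominatesInverseSquare p b) (hb : 0 ≤ b) (hδ : 0 ≤ δ)
    (hδ₁ : δ ≤ 1) (hbδ : Real.exp (-(b / 40)) ≤ δ / 64) (n : ℕ) (a : ℤ) :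
    unrootedProb p (density n) (block a (halfLen n)) a ≤ δ * (1 - 1 / scale n) := by
  induction n with
  | zero =>
    rw [density_zero, halfLen]
    calc unrootedProb p 1 (block a 1) a ≤ Real.exp (-b) := unrootedProb_unit_block_le hp a
      _ ≤ δ / 32 ^ 6 := exp_neg_le_div_pow hδ hδ₁ hbδ
      _ = δ * (1 / 32 ^ 6) := (mul_one_div _ _).symm
      _ ≤ δ * (1 - 1 / scale 0) := by
          gcongr
          norm_num [scale]
  | succ n ih =>
    obtain ⟨N, hN, hdensity⟩ := exists_density_succ_mul_le n
    have hx : (32 : ℝ) ≤ scale n := by exact_mod_cast le_scale n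
    have hstep := unrootedProb_renormalize (o := a) (by linarith [le_density n])
      (Nat.zero_lt_of_lt (lt_halfLen n)) hdensity (by omega)
      fun j => badProb_block_le hp hb hδ hδ₁ hbδ n (a + j * halfLen n)
    rw [halfLen, scale_succ]
    calc _ ≤ δ * (1 - 1 / scale n) + 2 * (scale n ^ 2 : ℕ) * (δ / scale n ^ 6) :=
          hstep.trans (by gcongr)
      _ = δ * (1 - 1 / scale n * (1 - 2 * (1 / scale n) ^ 3)) := by
          push_cast
          field_simp
          ring
      _ ≤ δ * (1 - 1 / scale n * (1 - 2 * (1 / 32) ^ 3)) := by gcongr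
      _ ≤ δ * (1 - 1 / scale n * (1 / 2)) := by
          gcongr
          norm_num
      _ = δ * (1 - 1 / (2 * scale n : ℕ)) := by
          push_cast
          ring

lemma exists_one_sub_le_percProb (hp : DominatesInverseSquare p b) (hb : 0 ≤ b) (hδ : 0 ≤ δ)
    (hδ₁ : δ ≤ 1) (hbδ : Real.exp (-(b / 40)) ≤ δ / 64) (Λ : Finset ℤ) (o : ℤ) :
    ∃ F, 1 - δ ≤ percProb p F (connectsToCompl o Λ) := by
  set n := #Λ
  have hΛ : (#Λ : ℝ) < density n * #(block o (halfLen n)) := by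
    have hlt : (n : ℝ) < halfLen n := by exact_mod_cast lt_halfLen n
    rw [card_block]
    push_cast
    nlinarith [le_density n]
  refine ⟨_, le_trans ?_ (one_sub_unrootedProb_le (p := p) hΛ)⟩
  have hle : δ * (1 - 1 / scale n) ≤ δ :=
    mul_le_of_le_one_right hδ (sub_le_self 1 (by positivity))
  linarith [unrootedProb_block_le hp hb hδ hδ₁ hbδ n o]

end Scales

lemma dominatesInverseSquare_of_eq_tanh {p : ℤ × ℤ → unitInterval} {J : ℤ × ℤ → ℝ} {β : ℝ}
    (hp : ∀ e, (p e : ℝ) = Real.tanh (β * J e)) (hβ : 0 ≤ β)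
    (hJ : ∀ x y : ℤ, x < y → 1 / ((y : ℝ) - x) ^ 2 ≤ J (x, y)) :
    DominatesInverseSquare p β := fun x y hxy => by
  rw [hp]
  exact (one_sub_tanh_le_exp_neg _).trans
    (Real.exp_le_exp.2 (neg_le_neg (mul_le_mul_of_nonneg_left (hJ x y hxy) hβ)))

theorem phase_transition_general {J : ℤ × ℤ → ℝ} (hJ₀ : 0 ≤ J)
    (hrow : ∀ x, Summable fun y => J (x, y)) (hcol : ∀ y, Summable fun x => J (x, y))
    (hJ : ∀ x y : ℤ, x < y → 1 / ((y : ℝ) - x) ^ 2 ≤ J (x, y))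
    {ε : ℝ} (hε₀ : 0 < ε) (hε₁ : ε ≤ 1) :
    ∃ β₀ : ℝ, 0 < β₀ ∧ ∀ β : ℝ, β₀ ≤ β → ∀ (Λ : Finset ℤ) (o : ℤ),
      1 - ε ≤ magnetization J β Λ spin o ∧ magnetization J β Λ (-spin) o ≤ -(1 - ε) := by
  have hβ₀ : 0 < 40 * Real.log (64 / ε) :=
    mul_pos (by norm_num) (Real.log_pos ((one_lt_div hε₀).2 (by linarith)))
  refine ⟨40 * Real.log (64 / ε), hβ₀, fun β hβ Λ o => ?_⟩
  have hexp : Real.exp (-(β / 40)) ≤ ε / 64 := by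
    rw [← Real.le_log_iff_exp_le (by positivity), ← inv_div 64 ε, Real.log_inv]
    linarith
  have hβ_nonneg : 0 ≤ β := hβ₀.le.trans hβ
  let p : ℤ × ℤ → unitInterval := fun e =>
    ⟨Real.tanh (β * J e), tanh_mem_unitInterval (mul_nonneg hβ_nonneg (hJ₀ e))⟩
  obtain ⟨F, hF⟩ := exists_one_sub_le_percProb (p := p)
    (dominatesInverseSquare_of_eq_tanh (fun _ => rfl) hβ_nonneg hJ) hβ_nonneg hε₀.le hε₁ hexp Λ o
  have hmag : 1 - ε ≤ magnetization J β Λ spin o :=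
    hF.trans (percProb_le_magnetization (fun _ => rfl)
      (fun A _ => summable_mul_one_sub_edgeSpin hJ₀ hrow hcol A) o F)
  exact ⟨hmag, by rw [magnetization_neg]; exact neg_le_neg hmag⟩

section PowerLaw

variable {α : ℝ}

/-- The coupling `|x - y| ^ (-α)` of `hamJ`, placed on the ordered pairs `x < y` only, so that each
pair of sites is counted once. -/
def powerCoupling (α : ℝ) (e : ℤ × ℤ) : ℝ :=
  if e.1 < e.2 then |(e.1 : ℝ) - e.2| ^ (-α) else 0

lemma powerCoupling_nonneg (α : ℝ) : 0 ≤ powerCoupling α := fun e => by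
  rw [powerCoupling]
  split_ifs <;> simp only [Pi.zero_apply] <;> positivity

lemma powerCoupling_le (α : ℝ) (e : ℤ × ℤ) :
    powerCoupling α e ≤ |((e.1 - e.2 : ℤ) : ℝ)| ^ (-α) := by
  rw [powerCoupling]
  split_ifs
  · push_cast
    rfl
  · positivity

lemma summable_powerCoupling_left (hα : 1 < α) (x : ℤ) :
    Summable fun y => powerCoupling α (x, y) :=
  .of_nonneg_of_le (fun y => powerCoupling_nonneg α (x, y)) (fun y => powerCoupling_le α (x, y))
    ((Equiv.subLeft x).summable_iff.2 (Real.summable_abs_int_rpow hα))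

lemma summable_powerCoupling_right (hα : 1 < α) (y : ℤ) :
    Summable fun x => powerCoupling α (x, y) :=
  .of_nonneg_of_le (fun x => powerCoupling_nonneg α (x, y)) (fun x => powerCoupling_le α (x, y))
    ((Equiv.subRight y).summable_iff.2 (Real.summable_abs_int_rpow hα))

lemma one_div_sq_le_powerCoupling (hα : α ≤ 2) {x y : ℤ} (hxy : x < y) :
    1 / ((y : ℝ) - x) ^ 2 ≤ powerCoupling α (x, y) := by
  have hone : (1 : ℝ) ≤ y - x := by exact_mod_cast Int.le_sub_left_of_add_le hxy
  have hpos : (0 : ℝ) < y - x := by linarith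
  rw [powerCoupling, if_pos hxy, abs_sub_comm, abs_of_pos hpos, one_div, ← Real.rpow_natCast,
    ← Real.rpow_neg hpos.le]
  exact Real.rpow_le_rpow_of_exponent_le hone (by push_cast; linarith)

lemma hamJ_eq_energy (α : ℝ) (σ : ℤ → ℝ) : hamJ α σ = energy (powerCoupling α) σ := by
  simp only [hamJ, energy, powerCoupling, ite_mul, zero_mul]

lemma spinM_eq_neg_spin : spinM = -spin := by
  ext A x
  rw [spinM, Pi.neg_apply, Pi.neg_apply, spin]
  split_ifs <;> norm_num

lemma avgP_eq_magnetization (α β : ℝ) (L : ℕ) :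
    avgP α β L = magnetization (powerCoupling α) β (Finset.Icc (-L) L) spin 0 := by
  simp only [avgP, hamJ_eq_energy]
  rfl

lemma avgM_eq_magnetization (α β : ℝ) (L : ℕ) :
    avgM α β L = magnetization (powerCoupling α) β (Finset.Icc (-L) L) (-spin) 0 := by
  simp only [avgM, hamJ_eq_energy, spinM_eq_neg_spin]
  rfl

end PowerLaw

/-- phase transition for the 1d long-range Ising model with `1 < α ≤ 2`:
the plus and minus finite-volume magnetizations are uniformly separated at low
temperature. -/
theorem phase_transition (α : ℝ) (hα1 : 1 < α) (hα2 : α ≤ 2)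
    (ε : ℝ) (hε0 : 0 < ε) (hε1 : ε < 1) :
    ∃ β₀ : ℝ, 0 < β₀ ∧ ∀ β : ℝ, β₀ ≤ β → ∀ L : ℕ,
      1 - ε ≤ avgP α β L ∧ avgM α β L ≤ -(1 - ε) := by
  obtain ⟨β₀, hβ₀, h⟩ := phase_transition_general (powerCoupling_nonneg α)
    (summable_powerCoupling_left hα1) (summable_powerCoupling_right hα1)
    (fun _ _ => one_div_sq_le_powerCoupling hα2) hε0 hε1.le
  exact ⟨β₀, hβ₀, fun β hβ L => by
    rw [avgP_eq_magnetization, avgM_eq_magnetization]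
    exact h β hβ _ 0⟩
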